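/- For each ν ∈ (0, 1−α) there exist ε_ν > 0, a > 0 and a constant C > 0, all independent of ε and of the profile, such that every normalised self-similar profile φ_ε for K_ε with ε ∈ (0, ε_ν] satisfies φ_ε(x) ≤ C ω_{−α−ν,0}(x) e^{−ax} for almost every x ∈ (0,∞). -/

import Mathlib

open MeasureTheory Real Set Filter

noncomputable def weight (a b x : ℝ) : ℝ := if x ≤ 1 then x ^ a else x ^ b

noncomputable def Xnorm (a b : ℝ) (g : ℝ → ℝ) : ℝ :=
  ∫ x in Ioi (0:ℝ), |g x| * weight a b x

def MemX (a b : ℝ) (g : ℝ → ℝ) : Prop :=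
  IntegrableOn (fun x => g x * weight a b x) (Ioi 0)

noncomputable def Kern (ε : ℝ) (W : ℝ → ℝ → ℝ) (x y : ℝ) : ℝ := 2 + ε * W x y

def GoodW (α : ℝ) (W : ℝ → ℝ → ℝ) : Prop :=
  ContinuousOn (fun p : ℝ × ℝ => W p.1 p.2) (Ioi 0 ×ˢ Ioi 0) ∧
  (∀ x y : ℝ, 0 < x → 0 < y → W x y = W y x) ∧
  (∀ l x y : ℝ, 0 < l → 0 < x → 0 < y → W (l * x) (l * y) = W x y) ∧
  (∀ x y : ℝ, 0 < x → 0 < y → 0 ≤ W x y ∧ W x y ≤ (x / y) ^ α + (y / x) ^ α)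

def IsProfile (K : ℝ → ℝ → ℝ) (φ : ℝ → ℝ) : Prop :=
  LocallyIntegrableOn φ (Ioi 0) ∧
  (∀ᵐ x ∂(volume.restrict (Ioi (0:ℝ))), 0 ≤ φ x) ∧
  IntegrableOn (fun x => x * φ x) (Ioi 0) ∧
  (∀ᵐ x ∂(volume.restrict (Ioi (0:ℝ))),
    x ^ 2 * φ x = ∫ y in Ioo 0 x, ∫ z in Ioi (x - y), y * K y z * φ y * φ z)

def IsNormalised (φ : ℝ → ℝ) : Prop := ∫ x in Ioi (0:ℝ), x * φ x = 1

/- Testing the profile equation against the derivative of `-(1 - e^{-qx}) / x` shows that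
`Q(q) = ∫ (1 - e^{-qx}) φ(x) dx` satisfies `Q - q Q' ≤ Q² + O(ε q^{2-α})`, a perturbed Riccati
inequality for `Q / q`, which tends to `1` at `0`. Hence `Q(L) ≥ L / (1 + L)` up to an error of
order `ε`, and for small `ε` the number `∫_δ^∞ φ` of clusters is close to `1 ≥ ∫ φ` for some `δ > 0`
independent of `φ`. Testing against `x^{-β-1}` on `(0, δ)`, where every cluster merges with those
above `δ` at rate at least `2`, then bounds `∫ x^{1-β} φ` for each `β < 2`. Testing against powers
gives a Catalan-type recursion for the moments divided by `n!`, hence an exponential moment. These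
two integrals control the right-hand side of the profile equation pointwise, by `x^{β-α}` near `0`
and by `e^{-ax}` everywhere. -/

open scoped ENNReal

/-- A kernel on `(0, ∞)²` lying between the constant kernel `2` and its perturbation of size `ε`
with singularities of order `α`; for `W` as in `GoodW α W`, the kernel `Kern ε W` is one. Off the
open quadrant `K` is arbitrary. -/
structure IsNearConstantKernel (α ε : ℝ) (K : ℝ → ℝ → ℝ) : Prop where
  aemeasurable : AEMeasurable (Function.uncurry K) (volume.restrict (Ioi 0 ×ˢ Ioi 0))
  symm : ∀ ⦃y z : ℝ⦄, 0 < y → 0 < z → K y z = K z y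
  two_le : ∀ ⦃y z : ℝ⦄, 0 < y → 0 < z → 2 ≤ K y z
  le : ∀ ⦃y z : ℝ⦄, 0 < y → 0 < z → K y z ≤ 2 + ε * ((y / z) ^ α + (z / y) ^ α)

/-- A normalised self-similar profile for `K`, as the measure `μ = φ(x) dx` on `(0, ∞)`; the
defining equation is tested against nonnegative functions, so that all integrals make sense in
`[0, ∞]`. -/
structure IsWeakProfile (K : ℝ → ℝ → ℝ) (μ : Measure ℝ) : Prop where
  ae_pos : ∀ᵐ x ∂μ, 0 < x
  lintegral_id : ∫⁻ x, ENNReal.ofReal x ∂μ = 1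
  aemeasurable_kernel : AEMeasurable (Function.uncurry K) (μ.prod μ)
  weak : ∀ g : ℝ → ℝ≥0∞, Measurable g →
    ∫⁻ x, ENNReal.ofReal (x ^ 2) * g x ∂μ =
      ∫⁻ p, ENNReal.ofReal (p.1 * K p.1 p.2) * (∫⁻ x in Ioo p.1 (p.1 + p.2), g x) ∂(μ.prod μ)

/-- The pairs `(y, z)` of sizes whose merger carries the cluster of size `y` across the size `x`. -/
def crossing (x : ℝ) : Set (ℝ × ℝ) := {p | p.1 < x ∧ x < p.1 + p.2}

/-- The right-hand side of the profile equation at `x`: the rate at which coagulation carries mass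
across the size `x`, when the sizes are distributed according to `μ`. -/
noncomputable def flux (K : ℝ → ℝ → ℝ) (μ : Measure ℝ) (x : ℝ) : ℝ≥0∞ :=
  ∫⁻ p in crossing x, ENNReal.ofReal (p.1 * K p.1 p.2) ∂(μ.prod μ)

variable {α ε : ℝ} {K : ℝ → ℝ → ℝ} {μ : Measure ℝ}

namespace IsNearConstantKernel

lemma nonneg (hK : IsNearConstantKernel α ε K) ⦃y z : ℝ⦄ (hy : 0 < y) (hz : 0 < z) : 0 ≤ K y z :=
  zero_le_two.trans (hK.two_le hy hz)

lemma eps_nonneg (hK : IsNearConstantKernel α ε K) : 0 ≤ ε := by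
  have h := (hK.two_le one_pos one_pos).trans (hK.le one_pos one_pos)
  norm_num at h
  linarith

end IsNearConstantKernel

lemma ae_prod_pos [SFinite μ] (hμ : ∀ᵐ x ∂μ, 0 < x) :
    ∀ᵐ p ∂(μ.prod μ), 0 < p.1 ∧ 0 < p.2 :=
  (Measure.quasiMeasurePreserving_fst.ae hμ).and (Measure.quasiMeasurePreserving_snd.ae hμ)

lemma setLIntegral_Ioo_eq_ofReal_sub {G g : ℝ → ℝ} {a b : ℝ} (hab : a ≤ b)
    (hG : ∀ x ∈ Icc a b, HasDerivAt G (g x) x) (hg : ContinuousOn g (Icc a b))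
    (hg₀ : ∀ x ∈ Icc a b, 0 ≤ g x) :
    ∫⁻ x in Ioo a b, ENNReal.ofReal (g x) = ENNReal.ofReal (G b - G a) := by
  rw [← uIcc_of_le hab] at hG hg
  have hint : IntervalIntegrable g volume a b := hg.intervalIntegrable
  rw [← intervalIntegral.integral_eq_sub_of_hasDerivAt hG hint,
    intervalIntegral.integral_of_le hab, ofReal_integral_eq_lintegral_ofReal hint.1]
  · exact setLIntegral_congr Ioo_ae_eq_Ioc
  · exact ae_restrict_of_forall_mem measurableSet_Ioc fun x hx ↦ hg₀ x (Ioc_subset_Icc_self hx)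

namespace IsWeakProfile

lemma ae_prod_pos [SFinite μ] (h : IsWeakProfile K μ) : ∀ᵐ p ∂(μ.prod μ), 0 < p.1 ∧ 0 < p.2 :=
  _root_.ae_prod_pos h.ae_pos

lemma lintegral_eq_of_hasDerivAt [SFinite μ] (h : IsWeakProfile K μ)
    (hK : ∀ ⦃y z : ℝ⦄, 0 < y → 0 < z → 0 ≤ K y z) {G g : ℝ → ℝ} (hgm : Measurable g)
    (hG : ∀ x, 0 < x → HasDerivAt G (g x) x) (hg : ContinuousOn g (Ioi 0))
    (hg₀ : ∀ x, 0 < x → 0 ≤ g x) :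
    ∫⁻ x, ENNReal.ofReal (x ^ 2 * g x) ∂μ =
      ∫⁻ p, ENNReal.ofReal (p.1 * K p.1 p.2 * (G (p.1 + p.2) - G p.1)) ∂(μ.prod μ) := by
  simp_rw [ENNReal.ofReal_mul (sq_nonneg _)]
  rw [h.weak _ hgm.ennreal_ofReal]
  refine lintegral_congr_ae ?_
  filter_upwards [h.ae_prod_pos] with p ⟨hy, hz⟩
  have hpos : Icc p.1 (p.1 + p.2) ⊆ Ioi 0 := fun x hx ↦ hy.trans_le hx.1
  rw [setLIntegral_Ioo_eq_ofReal_sub (by linarith) (fun x hx ↦ hG x (hpos hx)) (hg.mono hpos)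
    (fun x hx ↦ hg₀ x (hpos hx)), ← ENNReal.ofReal_mul (mul_nonneg hy.le (hK hy hz))]

lemma two_mul_lintegral_eq [SFinite μ] (h : IsWeakProfile K μ)
    (hsymm : ∀ ⦃y z : ℝ⦄, 0 < y → 0 < z → K y z = K z y)
    (hK : ∀ ⦃y z : ℝ⦄, 0 < y → 0 < z → 0 ≤ K y z) {G g : ℝ → ℝ} (hGm : Measurable G)
    (hgm : Measurable g) (hG : ∀ x, 0 < x → HasDerivAt G (g x) x)
    (hg : ContinuousOn g (Ioi 0)) (hg₀ : ∀ x, 0 < x → 0 ≤ g x) :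
    2 * ∫⁻ x, ENNReal.ofReal (x ^ 2 * g x) ∂μ =
      ∫⁻ p, ENNReal.ofReal (K p.1 p.2 *
        (p.1 * (G (p.1 + p.2) - G p.1) + p.2 * (G (p.1 + p.2) - G p.2))) ∂(μ.prod μ) := by
  have hmono : MonotoneOn G (Ioi 0) :=
    monotoneOn_of_hasDerivWithinAt_nonneg (convex_Ioi 0)
      (fun x hx ↦ (hG x hx).continuousAt.continuousWithinAt)
      (fun x hx ↦ (hG x (interior_subset hx)).hasDerivWithinAt)
      (fun x hx ↦ hg₀ x (interior_subset hx))
  have hmeas : AEMeasurable (fun p : ℝ × ℝ ↦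
      ENNReal.ofReal (p.1 * K p.1 p.2 * (G (p.1 + p.2) - G p.1))) (μ.prod μ) :=
    ((measurable_fst.aemeasurable.mul h.aemeasurable_kernel).mul
      ((hGm.comp (measurable_fst.add measurable_snd)).sub
        (hGm.comp measurable_fst)).aemeasurable).ennreal_ofReal
  rw [h.lintegral_eq_of_hasDerivAt hK hgm hG hg hg₀, two_mul]
  nth_rw 2 [← lintegral_prod_swap]
  rw [← lintegral_add_left' hmeas]
  refine lintegral_congr_ae ?_
  filter_upwards [h.ae_prod_pos] with p ⟨hy, hz⟩
  have hGy : 0 ≤ G (p.1 + p.2) - G p.1 :=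
    sub_nonneg.2 (hmono hy (add_pos hy hz) (by linarith))
  have hGz : 0 ≤ G (p.2 + p.1) - G p.2 :=
    sub_nonneg.2 (hmono hz (add_pos hz hy) (by linarith))
  simp only [Prod.fst_swap, Prod.snd_swap]
  rw [← ENNReal.ofReal_add (mul_nonneg (mul_nonneg hy.le (hK hy hz)) hGy)
    (mul_nonneg (mul_nonneg hz.le (hK hz hy)) hGz), hsymm hz hy, add_comm p.2 p.1]
  ring_nf

end IsWeakProfile

section LaplaceTransform

lemma one_sub_exp_neg_nonneg {t : ℝ} (ht : 0 ≤ t) : 0 ≤ 1 - exp (-t) :=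
  sub_nonneg.2 (exp_le_one_iff.2 (neg_nonpos.2 ht))

lemma one_sub_exp_neg_le_self (t : ℝ) : 1 - exp (-t) ≤ t := by
  linarith [one_sub_le_exp_neg t]

lemma one_sub_exp_neg_le_one (t : ℝ) : 1 - exp (-t) ≤ 1 :=
  sub_le_self _ (exp_pos _).le

lemma one_sub_exp_neg_le_rpow {t s : ℝ} (ht : 0 < t) (hs₀ : 0 ≤ s) (hs₁ : s ≤ 1) :
    1 - exp (-t) ≤ t ^ s := by
  rcases le_total t 1 with h | h
  · exact (one_sub_exp_neg_le_self t).trans (self_le_rpow_of_le_one ht.le h hs₁)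
  · exact (one_sub_exp_neg_le_one t).trans (one_le_rpow h hs₀)

lemma one_sub_exp_neg_sub_mul_nonneg (t : ℝ) : 0 ≤ 1 - exp (-t) - t * exp (-t) := by
  have hle : (1 + t) * exp (-t) ≤ exp t * exp (-t) := by
    gcongr
    linarith [add_one_le_exp t]
  rw [← exp_add, add_neg_cancel, exp_zero] at hle
  linarith

lemma rpow_le_one_add {x s : ℝ} (hx : 0 ≤ x) (hs₀ : 0 ≤ s) (hs₁ : s ≤ 1) : x ^ s ≤ 1 + x := by
  rcases le_total x 1 with h | h
  · linarith [rpow_le_one hx h hs₀]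
  · linarith [rpow_le_self_of_one_le h hs₁]

/-- The desingularised Laplace transform `q ↦ ∫ (1 - e^{-qx}) dμ(x)` of a measure on `(0, ∞)`. -/
noncomputable def desingLaplace (μ : Measure ℝ) (q : ℝ) : ℝ := ∫ x, (1 - exp (-(q * x))) ∂μ

lemma integrable_one_sub_exp_neg [IsFiniteMeasure μ] (hμ : ∀ᵐ x ∂μ, 0 < x) {q : ℝ} (hq : 0 ≤ q) :
    Integrable (fun x ↦ 1 - exp (-(q * x))) μ := by
  refine (integrable_const (1 : ℝ)).mono' (by fun_prop) ?_
  filter_upwards [hμ] with x hx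
  rw [norm_of_nonneg (one_sub_exp_neg_nonneg (by positivity))]
  exact one_sub_exp_neg_le_one _

lemma integrable_mul_exp_neg (hμ : ∀ᵐ x ∂μ, 0 < x) (hint : Integrable (fun x ↦ x) μ) {q : ℝ}
    (hq : 0 ≤ q) : Integrable (fun x ↦ x * exp (-(q * x))) μ := by
  refine hint.mono' (by fun_prop) ?_
  filter_upwards [hμ] with x hx
  rw [norm_of_nonneg (by positivity)]
  exact mul_le_of_le_one_right hx.le (exp_le_one_iff.2 (neg_nonpos.2 (by positivity)))

lemma hasDerivAt_one_sub_exp_neg_mul (q x : ℝ) :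
    HasDerivAt (fun q ↦ 1 - exp (-(q * x))) (x * exp (-(q * x))) q :=
  (((hasDerivAt_id' q).mul_const x).fun_neg.exp.const_sub 1).congr_deriv (by ring)

lemma desingLaplace_nonneg (hμ : ∀ᵐ x ∂μ, 0 < x) {q : ℝ} (hq : 0 ≤ q) : 0 ≤ desingLaplace μ q :=
  integral_nonneg_of_ae <| hμ.mono fun _ hx ↦ one_sub_exp_neg_nonneg (mul_nonneg hq hx.le)

lemma desingLaplace_pos [IsFiniteMeasure μ] (hμ : ∀ᵐ x ∂μ, 0 < x) (hμ₀ : μ ≠ 0) {q : ℝ}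
    (hq : 0 < q) : 0 < desingLaplace μ q := by
  refine (integral_pos_iff_support_of_nonneg_ae
    (hμ.mono fun x hx ↦ one_sub_exp_neg_nonneg (by positivity))
    (integrable_one_sub_exp_neg hμ hq.le)).2 (pos_iff_ne_zero.2 fun hsupp ↦ ?_)
  have := ae_neBot.2 hμ₀
  obtain ⟨x, hx, hx'⟩ := (hμ.and (measure_eq_zero_iff_ae_notMem.1 hsupp)).exists
  exact hx' (sub_pos.2 (exp_lt_one_iff.2 (neg_neg_of_pos (mul_pos hq hx)))).ne'

lemma hasDerivAt_desingLaplace [IsFiniteMeasure μ] (hμ : ∀ᵐ x ∂μ, 0 < x)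
    (hint : Integrable (fun x ↦ x) μ) {q : ℝ} (hq : 0 < q) :
    HasDerivAt (desingLaplace μ) (∫ x, x * exp (-(q * x)) ∂μ) q := by
  refine (hasDerivAt_integral_of_dominated_loc_of_deriv_le (bound := fun x ↦ x) (Ioi_mem_nhds hq)
    (Eventually.of_forall fun q ↦ by fun_prop) (integrable_one_sub_exp_neg hμ hq.le) (by fun_prop)
    ?_ hint (Eventually.of_forall fun x q _ ↦ hasDerivAt_one_sub_exp_neg_mul q x)).2
  filter_upwards [hμ] with x hx q hq'
  rw [norm_of_nonneg (by positivity)]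
  exact mul_le_of_le_one_right hx.le
    (exp_le_one_iff.2 (neg_nonpos.2 (mul_nonneg (le_of_lt hq') hx.le)))

lemma tendsto_desingLaplace_div (hμ : ∀ᵐ x ∂μ, 0 < x) (hint : Integrable (fun x ↦ x) μ) :
    Tendsto (fun q ↦ desingLaplace μ q / q) (nhdsWithin 0 (Ioi 0)) (nhds (∫ x, x ∂μ)) := by
  simp_rw [desingLaplace, ← integral_div]
  refine tendsto_integral_filter_of_dominated_convergence (fun x ↦ x)
    (Eventually.of_forall fun q ↦ by fun_prop) ?_ hint (Eventually.of_forall fun x ↦ ?_)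
  · filter_upwards [self_mem_nhdsWithin] with q (hq : 0 < q)
    filter_upwards [hμ] with x hx
    rw [norm_of_nonneg (div_nonneg (one_sub_exp_neg_nonneg (by positivity)) hq.le),
      div_le_iff₀ hq, mul_comm x]
    exact one_sub_exp_neg_le_self _
  · have hslope := (hasDerivAt_one_sub_exp_neg_mul 0 x).hasDerivWithinAt (s := Ioi 0)
    rw [hasDerivWithinAt_iff_tendsto_slope' self_notMem_Ioi] at hslope
    simpa [slope_fun_def_field] using hslope

lemma desingLaplace_le [IsFiniteMeasure μ] (hμ : ∀ᵐ x ∂μ, 0 < x) {q δ : ℝ} (hq : 0 ≤ q)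
    (hδ : 0 ≤ δ) : desingLaplace μ q ≤ μ.real (Ioi δ) + q * δ * μ.real univ := by
  have hind : Integrable ((Ioi δ).indicator (1 : ℝ → ℝ)) μ :=
    (integrable_const 1).indicator measurableSet_Ioi
  calc desingLaplace μ q ≤ ∫ x, ((Ioi δ).indicator 1 x + q * δ) ∂μ := by
        refine integral_mono_ae (integrable_one_sub_exp_neg hμ hq)
          (hind.add (integrable_const _)) ?_
        filter_upwards with x
        by_cases hx : x ∈ Ioi δ
        · rw [indicator_of_mem hx, Pi.one_apply]
          linarith [one_sub_exp_neg_le_one (q * x), mul_nonneg hq hδ]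
        · rw [indicator_of_notMem hx, zero_add]
          exact (one_sub_exp_neg_le_self _).trans (mul_le_mul_of_nonneg_left (not_lt.1 hx) hq)
    _ = μ.real (Ioi δ) + q * δ * μ.real univ := by
        rw [integral_add hind (integrable_const _), integral_indicator_one measurableSet_Ioi,
          integral_const, smul_eq_mul, mul_comm (μ.real univ)]

end LaplaceTransform

lemma inv_add_inv_le_of_neg_sq_le_deriv {u w w' : ℝ → ℝ} {c L : ℝ} (hc : 0 < c) (hL : 0 < L)
    (hw₀ : ∀ q, 0 < q → 0 < w q) (hw : ∀ q, 0 < q → HasDerivAt w (w' q) q)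
    (hw' : ∀ q, 0 < q → -w q ^ 2 ≤ w' q) (hu : Tendsto u (nhdsWithin 0 (Ioi 0)) (nhds c))
    (huw : ∀ q, 0 < q → u q ≤ w q) : (c⁻¹ + L)⁻¹ ≤ w L := by
  have hderiv (q) (hq : 0 < q) : HasDerivAt (fun q ↦ (w q)⁻¹ - q) (-w' q / w q ^ 2 - 1) q :=
    ((hw q hq).inv (hw₀ q hq).ne').sub (hasDerivAt_id q)
  have hanti : AntitoneOn (fun q ↦ (w q)⁻¹ - q) (Ioi 0) := by
    refine antitoneOn_of_hasDerivWithinAt_nonpos (convex_Ioi 0)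
      (fun q hq ↦ (hderiv q hq).continuousAt.continuousWithinAt)
      (fun q hq ↦ (hderiv q (interior_subset hq)).hasDerivWithinAt) fun q hq ↦ ?_
    have hq' : 0 < q := interior_subset hq
    rw [sub_nonpos, div_le_one (pow_pos (hw₀ q hq') 2)]
    linarith [hw' q hq']
  have hbound : (w L)⁻¹ - L ≤ c⁻¹ := by
    refine ge_of_tendsto (hu.inv₀ hc.ne') ?_
    filter_upwards [hu.eventually (lt_mem_nhds hc), Ioo_mem_nhdsGT hL] with q huq hq
    exact (hanti hq.1 hL hq.2.le).trans
      ((sub_le_self _ hq.1.le).trans (inv_anti₀ huq (huw q hq.1)))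
  exact inv_le_of_inv_le₀ (hw₀ L hL) (by linarith)

namespace IsWeakProfile

lemma integrable_id (h : IsWeakProfile K μ) : Integrable (fun x ↦ x) μ := by
  refine ⟨by fun_prop, ?_⟩
  rw [hasFiniteIntegral_iff_ofReal (h.ae_pos.mono fun _ hx ↦ hx.le), h.lintegral_id]
  exact ENNReal.one_lt_top

lemma integral_id (h : IsWeakProfile K μ) : ∫ x, x ∂μ = 1 := by
  rw [integral_eq_lintegral_of_nonneg_ae (h.ae_pos.mono fun _ hx ↦ hx.le) (by fun_prop),
    h.lintegral_id, ENNReal.toReal_one]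

lemma ne_zero (h : IsWeakProfile K μ) : μ ≠ 0 := by
  rintro rfl
  simpa using h.lintegral_id

lemma lintegral_const_mul_id (h : IsWeakProfile K μ) {c : ℝ} (hc : 0 ≤ c) :
    ∫⁻ x, ENNReal.ofReal (c * x) ∂μ = ENNReal.ofReal c := by
  simp_rw [ENNReal.ofReal_mul hc]
  rw [lintegral_const_mul _ ENNReal.measurable_ofReal, h.lintegral_id, mul_one]

lemma lintegral_rpow_mul_one_sub_exp_le (h : IsWeakProfile K μ) (hα₀ : 0 ≤ α) (hα₁ : α ≤ 1) {q : ℝ}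
    (hq : 0 < q) :
    ∫⁻ x, ENNReal.ofReal (x ^ α * (1 - exp (-(q * x)))) ∂μ ≤ ENNReal.ofReal (q ^ (1 - α)) := by
  rw [← h.lintegral_const_mul_id (by positivity)]
  refine lintegral_mono_ae (h.ae_pos.mono fun x hx ↦ ENNReal.ofReal_le_ofReal ?_)
  calc x ^ α * (1 - exp (-(q * x))) ≤ x ^ α * (q * x) ^ (1 - α) := by
        gcongr
        exact one_sub_exp_neg_le_rpow (by positivity) (by linarith) (by linarith)
    _ = q ^ (1 - α) * x := by
        rw [mul_rpow hq.le hx.le, mul_left_comm, ← rpow_add hx, add_sub_cancel, rpow_one]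

lemma lintegral_rpow_neg_mul_one_sub_exp_le (h : IsWeakProfile K μ)
    (hμ : μ univ ≤ 1) (hα₀ : 0 ≤ α) (hα₁ : α ≤ 1) {q : ℝ} (hq : 0 < q) :
    ∫⁻ x, ENNReal.ofReal (x ^ (-α) * (1 - exp (-(q * x)))) ∂μ ≤ ENNReal.ofReal (2 * q) := by
  have hle (x : ℝ) (hx : 0 < x) : x ^ (-α) * (1 - exp (-(q * x))) ≤ q + q * x := calc
    x ^ (-α) * (1 - exp (-(q * x))) ≤ x ^ (-α) * (q * x) := by
      gcongr
      exact one_sub_exp_neg_le_self _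
    _ = q * x ^ (1 - α) := by
      rw [mul_left_comm, ← rpow_add_one hx.ne', neg_add_eq_sub]
    _ ≤ q * (1 + x) := by
      gcongr
      exact rpow_le_one_add hx.le (by linarith) (by linarith)
    _ = q + q * x := by ring
  calc ∫⁻ x, ENNReal.ofReal (x ^ (-α) * (1 - exp (-(q * x)))) ∂μ
      ≤ ∫⁻ x, (ENNReal.ofReal q + ENNReal.ofReal (q * x)) ∂μ :=
        lintegral_mono_ae <| h.ae_pos.mono fun x hx ↦
          (ENNReal.ofReal_le_ofReal (hle x hx)).trans ENNReal.ofReal_add_le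
    _ = ENNReal.ofReal q * μ univ + ENNReal.ofReal q := by
        rw [lintegral_add_left measurable_const, lintegral_const, h.lintegral_const_mul_id hq.le]
    _ ≤ ENNReal.ofReal q * 1 + ENNReal.ofReal q := by gcongr
    _ = ENNReal.ofReal (2 * q) := by rw [mul_one, two_mul, ENNReal.ofReal_add hq.le hq.le]

variable [SFinite μ]

lemma two_mul_lintegral_laplace (h : IsWeakProfile K μ) (hK : IsNearConstantKernel α ε K) (q : ℝ) :
    2 * ∫⁻ x, ENNReal.ofReal (1 - exp (-(q * x)) - q * x * exp (-(q * x))) ∂μ =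
      ∫⁻ p, ENNReal.ofReal (K p.1 p.2 *
        ((1 - exp (-(q * p.1))) * (1 - exp (-(q * p.2))))) ∂(μ.prod μ) := by
  set G : ℝ → ℝ := fun x ↦ -(1 - exp (-(q * x))) / x
  set g : ℝ → ℝ := fun x ↦ (1 - exp (-(q * x)) - q * x * exp (-(q * x))) / x ^ 2
  have hG (x : ℝ) (hx : 0 < x) : HasDerivAt G (g x) x := by
    have hexp : HasDerivAt (fun x ↦ 1 - exp (-(q * x))) (q * exp (-(q * x))) x := by
      simpa only [mul_comm] using hasDerivAt_one_sub_exp_neg_mul x q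
    exact (hexp.fun_neg.fun_div (hasDerivAt_id' x) hx.ne').congr_deriv (by ring)
  have hg : ContinuousOn g (Ioi 0) := ContinuousOn.div (by fun_prop) (by fun_prop)
    fun x hx ↦ pow_ne_zero 2 (ne_of_gt hx)
  have hg₀ (x : ℝ) (_ : 0 < x) : 0 ≤ g x :=
    div_nonneg (one_sub_exp_neg_sub_mul_nonneg _) (sq_nonneg x)
  have hweak := h.two_mul_lintegral_eq hK.symm hK.nonneg (by fun_prop) (by fun_prop) hG hg hg₀
  convert hweak using 1
  · congr 1
    refine lintegral_congr_ae (h.ae_pos.mono fun x hx ↦ ?_)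
    have hx' : x ≠ 0 := hx.ne'
    simp only [g, mul_div_cancel₀ _ (pow_ne_zero 2 hx')]
  · refine lintegral_congr_ae (h.ae_prod_pos.mono fun p ⟨hy, hz⟩ ↦ ?_)
    have hexp : exp (-(q * (p.1 + p.2))) = exp (-(q * p.1)) * exp (-(q * p.2)) := by
      rw [← exp_add]; ring_nf
    simp only [G, hexp]
    congr 2
    field_simp
    ring

end IsWeakProfile

lemma IsNearConstantKernel.ofReal_mul_mul_le (hK : IsNearConstantKernel α ε K) {y z a b : ℝ}
    (hy : 0 < y) (hz : 0 < z) (ha : 0 ≤ a) (hb : 0 ≤ b) :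
    ENNReal.ofReal (K y z * (a * b)) ≤ 2 * (ENNReal.ofReal a * ENNReal.ofReal b) +
      ENNReal.ofReal ε * (ENNReal.ofReal (y ^ α * a) * ENNReal.ofReal (z ^ (-α) * b) +
        ENNReal.ofReal (y ^ (-α) * a) * ENNReal.ofReal (z ^ α * b)) := by
  have hε := hK.eps_nonneg
  have hle : K y z * (a * b) ≤ 2 * (a * b) +
      ε * ((y ^ α * a) * (z ^ (-α) * b) + (y ^ (-α) * a) * (z ^ α * b)) := calc
    K y z * (a * b) ≤ (2 + ε * ((y / z) ^ α + (z / y) ^ α)) * (a * b) := by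
      gcongr
      exact hK.le hy hz
    _ = _ := by
      rw [div_rpow hy.le hz.le, div_rpow hz.le hy.le, rpow_neg hy.le, rpow_neg hz.le]
      ring
  refine (ENNReal.ofReal_le_ofReal hle).trans_eq ?_
  rw [ENNReal.ofReal_add (by positivity) (by positivity), ENNReal.ofReal_mul zero_le_two,
    ENNReal.ofReal_mul hε, ENNReal.ofReal_add (by positivity) (by positivity),
    ENNReal.ofReal_mul ha, ENNReal.ofReal_mul (q := z ^ (-α) * b) (by positivity),
    ENNReal.ofReal_mul (q := z ^ α * b) (by positivity), ENNReal.ofReal_ofNat]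

namespace IsWeakProfile

variable [SFinite μ]

lemma lintegral_one_sub_exp_le_one (h : IsWeakProfile K μ) (hK : IsNearConstantKernel α ε K)
    {q : ℝ} (hq : 0 < q) : ∫⁻ x, ENNReal.ofReal (1 - exp (-(q * x))) ∂μ ≤ 1 := by
  set Q : ℝ≥0∞ := ∫⁻ x, ENNReal.ofReal (1 - exp (-(q * x))) ∂μ with hQ
  have hQ_top : Q ≠ ∞ := by
    refine ne_top_of_le_ne_top ENNReal.ofReal_ne_top (?_ : Q ≤ ENNReal.ofReal q)
    rw [← h.lintegral_const_mul_id hq.le]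
    exact lintegral_mono fun x ↦ ENNReal.ofReal_le_ofReal (one_sub_exp_neg_le_self _)
  have hsq : 2 * (Q * Q) ≤ 2 * Q := by
    calc 2 * (Q * Q) = ∫⁻ p, 2 * (ENNReal.ofReal (1 - exp (-(q * p.1))) *
          ENNReal.ofReal (1 - exp (-(q * p.2)))) ∂(μ.prod μ) := by
          rw [hQ, ← lintegral_prod_mul (by fun_prop) (by fun_prop),
            lintegral_const_mul _ (by fun_prop)]
      _ ≤ ∫⁻ p, ENNReal.ofReal (K p.1 p.2 *
          ((1 - exp (-(q * p.1))) * (1 - exp (-(q * p.2))))) ∂(μ.prod μ) := by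
          refine lintegral_mono_ae (h.ae_prod_pos.mono fun p ⟨hy, hz⟩ ↦ ?_)
          rw [ENNReal.ofReal_mul (hK.nonneg hy hz),
            ENNReal.ofReal_mul (one_sub_exp_neg_nonneg (by positivity))]
          gcongr
          simpa using ENNReal.ofReal_le_ofReal (hK.two_le hy hz)
      _ = 2 * ∫⁻ x, ENNReal.ofReal (1 - exp (-(q * x)) - q * x * exp (-(q * x))) ∂μ :=
          (h.two_mul_lintegral_laplace hK q).symm
      _ ≤ 2 * Q := by
          gcongr 2 * ?_
          refine lintegral_mono_ae (h.ae_pos.mono fun x hx ↦ ENNReal.ofReal_le_ofReal ?_)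
          exact sub_le_self _ (by positivity)
  rw [ENNReal.mul_le_mul_iff_right two_ne_zero ENNReal.ofNat_ne_top] at hsq
  by_contra! hlt
  exact hsq.not_gt (by simpa using
    ENNReal.mul_lt_mul_left (zero_lt_one.trans hlt).ne' hQ_top hlt)

lemma measure_univ_le_one (h : IsWeakProfile K μ) (hK : IsNearConstantKernel α ε K) :
    μ univ ≤ 1 := by
  have hlim : Tendsto (fun n : ℕ ↦ ∫⁻ x, ENNReal.ofReal (1 - exp (-(((n : ℝ) + 1) * x))) ∂μ)
      atTop (nhds (∫⁻ _, 1 ∂μ)) := by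
    refine lintegral_tendsto_of_tendsto_of_monotone (fun n ↦ by fun_prop) ?_ ?_
    · filter_upwards [h.ae_pos] with x hx m n hmn
      dsimp only
      gcongr
    · filter_upwards [h.ae_pos] with x hx
      have hexp : Tendsto (fun n : ℕ ↦ exp (-(((n : ℝ) + 1) * x))) atTop (nhds 0) :=
        tendsto_exp_neg_atTop_nhds_zero.comp
          ((tendsto_atTop_add_const_right _ 1 tendsto_natCast_atTop_atTop).atTop_mul_const hx)
      simpa using ENNReal.tendsto_ofReal (hexp.const_sub 1)
  rw [← lintegral_one]
  exact le_of_tendsto' hlim fun n ↦ h.lintegral_one_sub_exp_le_one hK (by positivity)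

lemma isFiniteMeasure (h : IsWeakProfile K μ) (hK : IsNearConstantKernel α ε K) :
    IsFiniteMeasure μ :=
  ⟨(h.measure_univ_le_one hK).trans_lt ENNReal.one_lt_top⟩

lemma measureReal_univ_le_one (h : IsWeakProfile K μ) (hK : IsNearConstantKernel α ε K) :
    μ.real univ ≤ 1 :=
  ENNReal.toReal_mono ENNReal.one_ne_top (h.measure_univ_le_one hK)

lemma lintegral_laplace_le (h : IsWeakProfile K μ) (hK : IsNearConstantKernel α ε K)
    (hα₀ : 0 ≤ α) (hα₁ : α ≤ 1) {q : ℝ} (hq : 0 < q) :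
    ∫⁻ x, ENNReal.ofReal (1 - exp (-(q * x)) - q * x * exp (-(q * x))) ∂μ ≤
      (∫⁻ x, ENNReal.ofReal (1 - exp (-(q * x))) ∂μ) ^ 2 +
        ENNReal.ofReal (2 * ε * q ^ (2 - α)) := by
  set u : ℝ → ℝ := fun x ↦ 1 - exp (-(q * x))
  have hu (x) (hx : 0 < x) : 0 ≤ u x := one_sub_exp_neg_nonneg (by positivity)
  set U : ℝ → ℝ≥0∞ := fun x ↦ ENNReal.ofReal (u x)
  set A : ℝ → ℝ≥0∞ := fun x ↦ ENNReal.ofReal (x ^ α * u x)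
  set B : ℝ → ℝ≥0∞ := fun x ↦ ENNReal.ofReal (x ^ (-α) * u x)
  have hε := hK.eps_nonneg
  have hmain : 2 * ∫⁻ x, ENNReal.ofReal (u x - q * x * exp (-(q * x))) ∂μ ≤
      2 * ((∫⁻ x, U x ∂μ) ^ 2 + ENNReal.ofReal (2 * ε * q ^ (2 - α))) := calc
    _ = ∫⁻ p, ENNReal.ofReal (K p.1 p.2 * (u p.1 * u p.2)) ∂(μ.prod μ) :=
      h.two_mul_lintegral_laplace hK q
    _ ≤ ∫⁻ p, (2 * (U p.1 * U p.2) +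
          ENNReal.ofReal ε * (A p.1 * B p.2 + B p.1 * A p.2)) ∂(μ.prod μ) :=
      lintegral_mono_ae (h.ae_prod_pos.mono fun p hp ↦
        hK.ofReal_mul_mul_le hp.1 hp.2 (hu p.1 hp.1) (hu p.2 hp.2))
    _ = 2 * (∫⁻ x, U x ∂μ) ^ 2 +
          ENNReal.ofReal ε * (2 * ((∫⁻ x, A x ∂μ) * ∫⁻ x, B x ∂μ)) := by
      rw [lintegral_add_left (by fun_prop), lintegral_const_mul _ (by fun_prop),
        lintegral_const_mul _ (by fun_prop), lintegral_add_left (by fun_prop),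
        lintegral_prod_mul (by fun_prop) (by fun_prop),
        lintegral_prod_mul (by fun_prop) (by fun_prop),
        lintegral_prod_mul (by fun_prop) (by fun_prop)]
      ring
    _ ≤ 2 * (∫⁻ x, U x ∂μ) ^ 2 + ENNReal.ofReal ε *
          (2 * (ENNReal.ofReal (q ^ (1 - α)) * ENNReal.ofReal (2 * q))) := by
      gcongr
      · exact h.lintegral_rpow_mul_one_sub_exp_le hα₀ hα₁ hq
      · exact h.lintegral_rpow_neg_mul_one_sub_exp_le (h.measure_univ_le_one hK) hα₀ hα₁ hq
    _ = _ := by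
      rw [mul_add, ← ENNReal.ofReal_mul (by positivity), show (2 : ℝ) - α = 1 - α + 1 by ring,
        rpow_add_one hq.ne', mul_left_comm, ← ENNReal.ofReal_mul hε]
      ring_nf
  exact (ENNReal.mul_le_mul_iff_right two_ne_zero ENNReal.ofNat_ne_top).1 hmain

lemma desingLaplace_sub_le (h : IsWeakProfile K μ) (hK : IsNearConstantKernel α ε K)
    (hα₀ : 0 ≤ α) (hα₁ : α ≤ 1) {q : ℝ} (hq : 0 < q) :
    desingLaplace μ q - q * ∫ x, x * exp (-(q * x)) ∂μ ≤
      desingLaplace μ q ^ 2 + 2 * ε * q ^ (2 - α) := by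
  have := h.isFiniteMeasure hK
  have hε := hK.eps_nonneg
  have hQ := integrable_one_sub_exp_neg h.ae_pos hq.le
  have hD := (integrable_mul_exp_neg h.ae_pos h.integrable_id hq.le).const_mul q
  have hQD : Integrable (fun x ↦ 1 - exp (-(q * x)) - q * (x * exp (-(q * x)))) μ := hQ.sub hD
  have hQ_eq : ∫⁻ x, ENNReal.ofReal (1 - exp (-(q * x))) ∂μ = ENNReal.ofReal (desingLaplace μ q) :=
    (ofReal_integral_eq_lintegral_ofReal hQ
      (h.ae_pos.mono fun x hx ↦ one_sub_exp_neg_nonneg (by positivity))).symm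
  have hlap := h.lintegral_laplace_le hK hα₀ hα₁ hq
  simp_rw [mul_assoc q] at hlap
  rw [hQ_eq, ← ENNReal.ofReal_pow (desingLaplace_nonneg h.ae_pos hq.le),
    ← ENNReal.ofReal_add (by positivity) (by positivity),
    ← ofReal_integral_eq_lintegral_ofReal hQD (ae_of_all _ fun x ↦ by
      simpa only [Pi.zero_apply, mul_assoc] using one_sub_exp_neg_sub_mul_nonneg (q * x)),
    ENNReal.ofReal_le_ofReal_iff (by positivity)] at hlap
  rwa [desingLaplace, ← integral_const_mul, ← integral_sub hQ hD]

lemma neg_sq_desingLaplace_div_le (h : IsWeakProfile K μ) (hK : IsNearConstantKernel α ε K)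
    (hα₀ : 0 ≤ α) (hα₁ : α < 1) {q : ℝ} (hq : 0 < q) :
    -(desingLaplace μ q / q) ^ 2 ≤
      ((∫ x, x * exp (-(q * x)) ∂μ) * q - desingLaplace μ q * 1) / q ^ 2 +
        2 * ε / (1 - α) * ((1 - α) * q ^ (1 - α - 1)) := by
  set Q : ℝ := desingLaplace μ q
  set D : ℝ := ∫ x, x * exp (-(q * x)) ∂μ
  have hα : 1 - α ≠ 0 := (sub_pos.2 hα₁).ne'
  have hpow : 2 * ε / (1 - α) * ((1 - α) * q ^ (1 - α - 1)) = 2 * ε * q ^ (2 - α) / q ^ 2 := by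
    rw [show 1 - α - 1 = 2 - α - (2 : ℕ) by push_cast; ring, rpow_sub_natCast hq.ne']
    field_simp
  have hlap : Q - q * D ≤ Q ^ 2 + 2 * ε * q ^ (2 - α) :=
    h.desingLaplace_sub_le hK hα₀ hα₁.le hq
  calc -(Q / q) ^ 2 = -Q ^ 2 / q ^ 2 := by rw [div_pow, neg_div]
    _ ≤ (D * q - Q * 1 + 2 * ε * q ^ (2 - α)) / q ^ 2 := by gcongr; linarith
    _ = _ := by rw [hpow, add_div]

lemma le_desingLaplace (h : IsWeakProfile K μ) (hK : IsNearConstantKernel α ε K)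
    (hα₀ : 0 ≤ α) (hα₁ : α < 1) {L : ℝ} (hL : 0 < L) :
    L / (1 + L) - 2 * ε / (1 - α) * L ^ (2 - α) ≤ desingLaplace μ L := by
  have := h.isFiniteMeasure hK
  have hε := hK.eps_nonneg
  have : 0 < 1 - α := sub_pos.2 hα₁
  set Q : ℝ → ℝ := desingLaplace μ
  have hQ (q) (hq : 0 < q) : 0 ≤ Q q := desingLaplace_nonneg h.ae_pos hq.le
  set D : ℝ → ℝ := fun q ↦ ∫ x, x * exp (-(q * x)) ∂μ
  set c : ℝ := 2 * ε / (1 - α)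
  have : 0 ≤ c := by positivity
  -- The correction `c q ^ (1 - α)` absorbs the error term, leaving the Riccati inequality
  -- `w' ≥ -w²`.
  set w : ℝ → ℝ := fun q ↦ Q q / q + c * q ^ (1 - α) with hw
  have hlim : Tendsto (fun q ↦ Q q / q) (nhdsWithin 0 (Ioi 0)) (nhds 1) :=
    h.integral_id ▸ tendsto_desingLaplace_div h.ae_pos h.integrable_id
  have hle (q) (hq : 0 < q) : Q q / q ≤ w q := le_add_of_nonneg_right (by positivity)
  have hw₀ (q) (hq : 0 < q) : 0 < w q :=
    (div_pos (desingLaplace_pos h.ae_pos h.ne_zero hq) hq).trans_le (hle q hq)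
  have hderiv (q) (hq : 0 < q) :
      HasDerivAt w ((D q * q - Q q * 1) / q ^ 2 + c * ((1 - α) * q ^ (1 - α - 1))) q :=
    ((hasDerivAt_desingLaplace h.ae_pos h.integrable_id hq).fun_div (hasDerivAt_id' q)
      hq.ne').add ((hasDerivAt_rpow_const (Or.inl hq.ne')).const_mul c)
  have hriccati (q) (hq : 0 < q) :
      -w q ^ 2 ≤ (D q * q - Q q * 1) / q ^ 2 + c * ((1 - α) * q ^ (1 - α - 1)) := by
    have hsq : (Q q / q) ^ 2 ≤ w q ^ 2 :=
      pow_le_pow_left₀ (div_nonneg (hQ q hq) hq.le) (hle q hq) 2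
    exact (neg_le_neg hsq).trans (h.neg_sq_desingLaplace_div_le hK hα₀ hα₁ hq)
  have hmain := inv_add_inv_le_of_neg_sq_le_deriv one_pos hL hw₀ hderiv hriccati hlim hle
  have hL' : w L * L = Q L + c * L ^ (2 - α) := by
    rw [hw, show 2 - α = 1 - α + 1 by ring, rpow_add_one hL.ne']
    field_simp
  have : L / (1 + L) ≤ w L * L := by
    rw [inv_one] at hmain
    rw [div_eq_inv_mul]
    gcongr
  linarith

lemma one_sub_le_measureReal_Ioi (hα₀ : 0 ≤ α) (hα₁ : α < 1) {η : ℝ} (hη : 0 < η) :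
    ∃ ε₀ > 0, ∃ δ > 0, ∀ ε ≤ ε₀, ∀ (K : ℝ → ℝ → ℝ) (μ : Measure ℝ) [SFinite μ],
      IsNearConstantKernel α ε K → IsWeakProfile K μ → 1 - η ≤ μ.real (Ioi δ) := by
  have hα : 0 < 1 - α := sub_pos.2 hα₁
  set L : ℝ := 3 / η
  have hL₀ : 0 < L := by positivity
  refine ⟨η * (1 - α) / (6 * L ^ (2 - α)), by positivity, η / (3 * L), by positivity,
    fun ε hε K μ _ hK h ↦ ?_⟩
  have := h.isFiniteMeasure hK
  have hlower := h.le_desingLaplace hK hα₀ hα₁ hL₀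
  have hupper := desingLaplace_le h.ae_pos hL₀.le (show 0 ≤ η / (3 * L) by positivity)
  have hfrac : 1 - η / 3 ≤ L / (1 + L) := by
    have hLη : L * η = 3 := div_mul_cancel₀ 3 hη.ne'
    rw [le_div_iff₀ (by positivity)]
    linarith
  have herr : 2 * ε / (1 - α) * L ^ (2 - α) ≤ η / 3 := by
    rw [le_div_iff₀ (by positivity)] at hε
    rw [div_mul_eq_mul_div, div_le_iff₀ hα]
    linarith
  have hmass : L * (η / (3 * L)) * μ.real univ ≤ η / 3 := by
    rw [show L * (η / (3 * L)) = η / 3 by field_simp]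
    exact mul_le_of_le_one_right (by positivity) (h.measureReal_univ_le_one hK)
  linarith

end IsWeakProfile

lemma setLIntegral_Ioo_rpow_neg {β a b : ℝ} (hβ : 0 < β) (ha : 0 < a) (hab : a ≤ b) :
    ∫⁻ x in Ioo a b, ENNReal.ofReal (x ^ (-β - 1)) =
      ENNReal.ofReal ((a ^ (-β) - b ^ (-β)) / β) := by
  have hpos (x) (hx : x ∈ Icc a b) : 0 < x := ha.trans_le hx.1
  rw [setLIntegral_Ioo_eq_ofReal_sub (G := fun x ↦ -(x ^ (-β) / β)) hab (fun x hx ↦ ?_)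
    (fun x hx ↦ (continuousAt_rpow_const x _ (Or.inl (hpos x hx).ne')).continuousWithinAt)
    (fun x hx ↦ rpow_nonneg (hpos x hx).le _)]
  · ring_nf
  · refine (((hasDerivAt_rpow_const (p := -β) (Or.inl (hpos x hx).ne')).div_const
      β).fun_neg).congr_deriv ?_
    field_simp

lemma ofReal_le_setLIntegral_indicator_rpow_neg {β η δ b y : ℝ} (hβ : 0 < β) (hη : 0 ≤ η)
    (hy : y ∈ Ioo η δ) (hb : δ ≤ b) :
    ENNReal.ofReal ((y ^ (-β) - δ ^ (-β)) / β) ≤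
      ∫⁻ x in Ioo y b, (Ioo η δ).indicator (fun x ↦ ENNReal.ofReal (x ^ (-β - 1))) x := by
  rw [← setLIntegral_Ioo_rpow_neg hβ (hη.trans_lt hy.1) hy.2.le,
    setLIntegral_indicator measurableSet_Ioo]
  exact lintegral_mono_set fun x hx ↦ ⟨⟨hy.1.trans hx.1, hx.2⟩, hx.1, hx.2.trans_le hb⟩

lemma setLIntegral_Ioo_zero_le {f : ℝ → ℝ≥0∞} {δ : ℝ} {C : ℝ≥0∞}
    (h : ∀ η > 0, ∫⁻ x in Ioo η δ, f x ∂μ ≤ C) : ∫⁻ x in Ioo 0 δ, f x ∂μ ≤ C := by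
  have hUnion : Ioo 0 δ = ⋃ n : ℕ, Ioo (1 / ((n : ℝ) + 1)) δ := by
    ext x
    simp only [mem_Ioo, mem_iUnion, exists_and_right, and_congr_left_iff]
    exact fun _ ↦ ⟨exists_nat_one_div_lt, fun ⟨n, hn⟩ ↦ Nat.one_div_pos_of_nat.trans hn⟩
  have hmono : Monotone fun n : ℕ ↦ Ioo (1 / ((n : ℝ) + 1)) δ := fun m n hmn ↦
    Ioo_subset_Ioo_left (Nat.one_div_le_one_div hmn)
  rw [hUnion, setLIntegral_iUnion_of_directed _ hmono.directed_le]
  exact iSup_le fun n ↦ h _ Nat.one_div_pos_of_nat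

namespace IsWeakProfile

variable [SFinite μ] {β β' δ η : ℝ}

lemma setLIntegral_mul_measure_Ioi_le (h : IsWeakProfile K μ) (hK : IsNearConstantKernel α ε K)
    (hβ : 0 < β) (hη : 0 ≤ η) :
    (∫⁻ y in Ioo η δ, ENNReal.ofReal (2 * y * ((y ^ (-β) - δ ^ (-β)) / β)) ∂μ) * μ (Ioi δ) ≤
      ∫⁻ x in Ioo η δ, ENNReal.ofReal (x ^ (1 - β)) ∂μ := by
  set F : ℝ → ℝ≥0∞ := fun y ↦ ENNReal.ofReal (2 * y * ((y ^ (-β) - δ ^ (-β)) / β))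
  set g : ℝ → ℝ≥0∞ := (Ioo η δ).indicator fun x ↦ ENNReal.ofReal (x ^ (-β - 1))
  have hpt : ∀ p ∈ Ioo η δ ×ˢ Ioi δ, F p.1 * 1 ≤
      ENNReal.ofReal (p.1 * K p.1 p.2) * (∫⁻ x in Ioo p.1 (p.1 + p.2), g x) := by
    rintro ⟨y, z⟩ ⟨hy : y ∈ Ioo η δ, hz : δ < z⟩
    have hy₀ : 0 < y := hη.trans_lt hy.1
    have hz₀ : 0 < z := hy₀.trans (hy.2.trans hz)
    change ENNReal.ofReal (2 * y * ((y ^ (-β) - δ ^ (-β)) / β)) * 1 ≤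
      ENNReal.ofReal (y * K y z) * ∫⁻ x in Ioo y (y + z), g x
    rw [mul_one, ENNReal.ofReal_mul (by positivity), mul_comm 2]
    gcongr
    · exact hK.two_le hy₀ hz₀
    · exact ofReal_le_setLIntegral_indicator_rpow_neg hβ hη hy (by linarith)
  calc (∫⁻ y in Ioo η δ, F y ∂μ) * μ (Ioi δ)
      = ∫⁻ p in Ioo η δ ×ˢ Ioi δ, F p.1 * 1 ∂(μ.prod μ) := by
        rw [← Measure.prod_restrict, lintegral_prod_mul (by fun_prop) aemeasurable_const,
          setLIntegral_one]
    _ ≤ ∫⁻ p in Ioo η δ ×ˢ Ioi δ, ENNReal.ofReal (p.1 * K p.1 p.2) *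
          (∫⁻ x in Ioo p.1 (p.1 + p.2), g x) ∂(μ.prod μ) :=
        setLIntegral_mono' (measurableSet_Ioo.prod measurableSet_Ioi) hpt
    _ ≤ ∫⁻ p, ENNReal.ofReal (p.1 * K p.1 p.2) * (∫⁻ x in Ioo p.1 (p.1 + p.2), g x) ∂(μ.prod μ) :=
        setLIntegral_le_lintegral _ _
    _ = ∫⁻ x, ENNReal.ofReal (x ^ 2) * g x ∂μ :=
        (h.weak g ((by fun_prop : Measurable _).indicator measurableSet_Ioo)).symm
    _ = ∫⁻ x in Ioo η δ, ENNReal.ofReal (x ^ 2) * ENNReal.ofReal (x ^ (-β - 1)) ∂μ := by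
        rw [← lintegral_indicator measurableSet_Ioo]
        simp only [g, indicator_mul_right]
    _ = ∫⁻ x in Ioo η δ, ENNReal.ofReal (x ^ (1 - β)) ∂μ := by
        refine setLIntegral_congr_fun measurableSet_Ioo fun x hx ↦ ?_
        have hx₀ : 0 < x := hη.trans_lt hx.1
        rw [← ENNReal.ofReal_mul (sq_nonneg x), ← rpow_natCast, ← rpow_add hx₀]
        congr 2
        push_cast
        ring

lemma ofReal_mul_setLIntegral_rpow_le (h : IsWeakProfile K μ) (hK : IsNearConstantKernel α ε K)
    (hβ : 0 < β) (hβ' : 0 ≤ β') (hη : 0 ≤ η) (hδ : 0 < δ) (hmass : β' ≤ 2 * μ.real (Ioi δ)) :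
    ENNReal.ofReal (β' / β) * ∫⁻ x in Ioo η δ, ENNReal.ofReal (x ^ (1 - β)) ∂μ ≤
      ∫⁻ x in Ioo η δ, ENNReal.ofReal (x ^ (1 - β)) ∂μ + ENNReal.ofReal (β' / β * δ ^ (-β)) := by
  have := h.isFiniteMeasure hK
  have hpt (y) (hy : y ∈ Ioo η δ) : ENNReal.ofReal (β' / β * y ^ (1 - β)) ≤
      ENNReal.ofReal (2 * y * ((y ^ (-β) - δ ^ (-β)) / β)) * μ (Ioi δ) +
        ENNReal.ofReal (β' / β * δ ^ (-β) * y) := by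
    have hy₀ : 0 < y := hη.trans_lt hy.1
    have hmono : 0 ≤ y ^ (-β) - δ ^ (-β) :=
      sub_nonneg.2 (rpow_le_rpow_of_nonpos hy₀ hy.2.le (neg_nonpos.2 hβ.le))
    rw [← ofReal_measureReal, ← ENNReal.ofReal_mul (by positivity),
      ← ENNReal.ofReal_add (by positivity) (by positivity)]
    refine ENNReal.ofReal_le_ofReal ?_
    calc β' / β * y ^ (1 - β) = β' * (y * ((y ^ (-β) - δ ^ (-β)) / β)) + β' / β * δ ^ (-β) * y := by
          rw [sub_eq_neg_add, rpow_add_one hy₀.ne']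
          ring
      _ ≤ 2 * μ.real (Ioi δ) * (y * ((y ^ (-β) - δ ^ (-β)) / β)) + β' / β * δ ^ (-β) * y := by
          gcongr
      _ = _ := by ring
  calc ENNReal.ofReal (β' / β) * ∫⁻ x in Ioo η δ, ENNReal.ofReal (x ^ (1 - β)) ∂μ
      = ∫⁻ x in Ioo η δ, ENNReal.ofReal (β' / β * x ^ (1 - β)) ∂μ := by
        simp_rw [ENNReal.ofReal_mul (div_nonneg hβ' hβ.le)]
        rw [lintegral_const_mul _ (by fun_prop)]
    _ ≤ ∫⁻ y in Ioo η δ, (ENNReal.ofReal (2 * y * ((y ^ (-β) - δ ^ (-β)) / β)) * μ (Ioi δ) +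
          ENNReal.ofReal (β' / β * δ ^ (-β) * y)) ∂μ := setLIntegral_mono (by fun_prop) hpt
    _ = (∫⁻ y in Ioo η δ, ENNReal.ofReal (2 * y * ((y ^ (-β) - δ ^ (-β)) / β)) ∂μ) * μ (Ioi δ) +
          ∫⁻ y in Ioo η δ, ENNReal.ofReal (β' / β * δ ^ (-β) * y) ∂μ := by
        rw [lintegral_add_left (by fun_prop), lintegral_mul_const _ (by fun_prop)]
    _ ≤ _ := by
        gcongr
        · exact h.setLIntegral_mul_measure_Ioi_le hK hβ hη
        · exact (setLIntegral_le_lintegral _ _).trans_eq (h.lintegral_const_mul_id (by positivity))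

lemma setLIntegral_rpow_le (h : IsWeakProfile K μ) (hK : IsNearConstantKernel α ε K)
    (hβ : 1 ≤ β) (hββ' : β < β') (hη : 0 < η) (hδ : 0 < δ) (hmass : β' ≤ 2 * μ.real (Ioi δ)) :
    ∫⁻ x in Ioo η δ, ENNReal.ofReal (x ^ (1 - β)) ∂μ ≤
      ENNReal.ofReal (β' / (β' - β) * δ ^ (-β)) := by
  have hβ₀ : 0 < β := by linarith
  have := h.isFiniteMeasure hK
  have hle := h.ofReal_mul_setLIntegral_rpow_le hK hβ₀ (by linarith) hη.le hδ hmass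
  have hfin : ∫⁻ x in Ioo η δ, ENNReal.ofReal (x ^ (1 - β)) ∂μ ≠ ∞ := by
    refine ne_top_of_le_ne_top (b := ENNReal.ofReal (η ^ (1 - β)) * μ (Ioo η δ))
      (ENNReal.mul_ne_top ENNReal.ofReal_ne_top (measure_ne_top _ _)) ?_
    rw [← setLIntegral_const]
    exact setLIntegral_mono measurable_const fun x hx ↦ ENNReal.ofReal_le_ofReal
      (rpow_le_rpow_of_nonpos hη hx.1.le (by linarith))
  set S := ∫⁻ x in Ioo η δ, ENNReal.ofReal (x ^ (1 - β)) ∂μ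
  have hβ'₀ : 0 < β' := by linarith
  rw [← ENNReal.ofReal_toReal hfin] at hle ⊢
  rw [← ENNReal.ofReal_mul (by positivity), ← ENNReal.ofReal_add (by positivity) (by positivity),
    ENNReal.ofReal_le_ofReal_iff (by positivity)] at hle
  refine ENNReal.ofReal_le_ofReal ?_
  rw [div_mul_eq_mul_div, div_mul_eq_mul_div, ← sub_le_iff_le_add', div_sub' hβ₀.ne',
    div_le_div_iff_of_pos_right hβ₀] at hle
  rw [div_mul_eq_mul_div, le_div_iff₀ (sub_pos.2 hββ')]
  linarith

lemma lintegral_rpow_le (h : IsWeakProfile K μ) (hK : IsNearConstantKernel α ε K)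
    (hβ : 1 ≤ β) (hββ' : β < β') (hδ : 0 < δ) (hmass : β' ≤ 2 * μ.real (Ioi δ)) :
    ∫⁻ x, ENNReal.ofReal (x ^ (1 - β)) ∂μ ≤
      ENNReal.ofReal (β' / (β' - β) * δ ^ (-β) + δ ^ (1 - β)) := by
  have hβ'₀ : 0 < β' := by linarith
  have : 0 < β' - β := sub_pos.2 hββ'
  have hsmall : ∫⁻ x in Ioo 0 δ, ENNReal.ofReal (x ^ (1 - β)) ∂μ ≤
      ENNReal.ofReal (β' / (β' - β) * δ ^ (-β)) :=
    setLIntegral_Ioo_zero_le fun η hη ↦ h.setLIntegral_rpow_le hK hβ hββ' hη hδ hmass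
  have hlarge : ∫⁻ x in Ici δ, ENNReal.ofReal (x ^ (1 - β)) ∂μ ≤
      ENNReal.ofReal (δ ^ (1 - β)) := calc
    _ ≤ ∫⁻ _ in Ici δ, ENNReal.ofReal (δ ^ (1 - β)) ∂μ :=
      setLIntegral_mono measurable_const fun x hx ↦ ENNReal.ofReal_le_ofReal
        (rpow_le_rpow_of_nonpos hδ hx (by linarith))
    _ = ENNReal.ofReal (δ ^ (1 - β)) * μ (Ici δ) := setLIntegral_const _ _
    _ ≤ _ := mul_le_of_le_one_right' ((measure_mono (subset_univ _)).trans
      (h.measure_univ_le_one hK))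
  rw [ENNReal.ofReal_add (by positivity) (by positivity)]
  calc ∫⁻ x, ENNReal.ofReal (x ^ (1 - β)) ∂μ
      = ∫⁻ x in Ioi 0, ENNReal.ofReal (x ^ (1 - β)) ∂μ := by
        rw [Measure.restrict_eq_self_of_ae_mem (s := Ioi 0) h.ae_pos]
    _ ≤ ∫⁻ x in Ioo 0 δ, ENNReal.ofReal (x ^ (1 - β)) ∂μ +
          ∫⁻ x in Ici δ, ENNReal.ofReal (x ^ (1 - β)) ∂μ := by
        rw [← Ioo_union_Ici_eq_Ioi hδ]
        exact lintegral_union_le _ _ _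
    _ ≤ _ := add_le_add hsmall hlarge

lemma exists_lintegral_rpow_le (hα₀ : 0 ≤ α) (hα₁ : α < 1) (hβ : 1 ≤ β) (hβ₂ : β < 2) :
    ∃ ε₀ > 0, ∃ M > 0, ∀ ε ≤ ε₀, ∀ (K : ℝ → ℝ → ℝ) (μ : Measure ℝ) [SFinite μ],
      IsNearConstantKernel α ε K → IsWeakProfile K μ →
        ∫⁻ x, ENNReal.ofReal (x ^ (1 - β)) ∂μ ≤ ENNReal.ofReal M := by
  obtain ⟨ε₀, hε₀, δ, hδ, hmass⟩ :=
    one_sub_le_measureReal_Ioi hα₀ hα₁ (show 0 < (2 - β) / 4 by linarith)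
  have hβ' : β < (2 + β) / 2 := by linarith
  have : 0 < (2 + β) / 2 - β := sub_pos.2 hβ'
  refine ⟨ε₀, hε₀, _, by positivity, fun ε hε K μ _ hK h ↦
    h.lintegral_rpow_le hK hβ hβ' hδ ?_⟩
  linarith [hmass ε hε K μ hK h]

end IsWeakProfile

lemma rpow_le_one_add_sq {x s : ℝ} (hx : 0 ≤ x) (hs₀ : 0 ≤ s) (hs₂ : s ≤ 2) :
    x ^ s ≤ 1 + x ^ 2 := by
  have h := rpow_le_one_add (sq_nonneg x) (div_nonneg hs₀ zero_le_two) (by linarith : s / 2 ≤ 1)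
  rwa [← rpow_natCast, ← rpow_mul hx, Nat.cast_ofNat, mul_div_cancel₀ s two_ne_zero,
    rpow_ofNat] at h

lemma one_add_sq_le_mul_exp {a y : ℝ} (ha₀ : 0 < a) (ha₁ : a ≤ 1) (hy : 0 ≤ y) :
    1 + y ^ 2 ≤ 2 / a ^ 2 * exp (a * y) := by
  have hexp := quadratic_le_exp_of_nonneg (mul_nonneg ha₀.le hy)
  have ha : a ^ 2 ≤ 1 := pow_le_one₀ ha₀.le ha₁
  rw [div_mul_eq_mul_div, le_div_iff₀ (by positivity)]
  linarith [mul_nonneg ha₀.le hy, mul_pow a y 2]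

lemma add_rpow_mul_exp_le {a β z : ℝ} (hβ : 1 ≤ β) (ha₀ : 0 < a) (hz : 0 < z) :
    (3 + z + z ^ (1 - β)) * exp (a * z) ≤
      exp a * z ^ (1 - β) + (4 + 1 / a) * exp (2 * a * z) := by
  have hz_one : 0 ≤ z ^ (1 - β) := rpow_nonneg hz.le _
  have hz_rpow : z ^ (1 - β) * exp (a * z) ≤ exp a * z ^ (1 - β) + exp (a * z) := by
    rcases le_total z 1 with h | h
    · have : exp (a * z) ≤ exp a := exp_le_exp.2 (mul_le_of_le_one_right ha₀.le h)
      nlinarith [exp_pos (a * z)]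
    · have := rpow_le_one_of_one_le_of_nonpos h (sub_nonpos.2 hβ)
      nlinarith [exp_pos (a * z), exp_pos a]
  have hlin : 4 + z ≤ (4 + 1 / a) * exp (a * z) := by
    have : 1 ≤ exp (a * z) := one_le_exp (by positivity)
    have : 1 / a * (a * z) ≤ 1 / a * exp (a * z) := by
      gcongr
      linarith [add_one_le_exp (a * z)]
    rw [← mul_assoc, one_div_mul_cancel ha₀.ne'] at this
    linarith
  have hmul := mul_le_mul_of_nonneg_right hlin (exp_pos (a * z)).le
  rw [mul_assoc (4 + 1 / a), ← exp_add, ← two_mul, ← mul_assoc] at hmul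
  linarith

namespace IsNearConstantKernel

variable {β y z : ℝ}

lemma mul_le_of_le_one (hK : IsNearConstantKernel α ε K) (hα₀ : 0 ≤ α) (hα₁ : α ≤ 1)
    (hαβ : α ≤ β - 1) (hε : ε ≤ 1) (hy : 0 < y) (hz : 0 < z) :
    y * K y z ≤ (y ^ (1 - α) + y ^ (1 + α)) * (3 + z + z ^ (1 - β)) := by
  have hsplit : y * ((y / z) ^ α + (z / y) ^ α) =
      y ^ (1 + α) * z ^ (-α) + y ^ (1 - α) * z ^ α := by
    rw [div_rpow hy.le hz.le, div_rpow hz.le hy.le, rpow_add hy, rpow_sub hy, rpow_neg hz.le,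
      rpow_one]
    ring
  have hamgm : 2 * y ≤ y ^ (1 - α) + y ^ (1 + α) := by
    have hprod : y ^ ((1 - α) / 2) * y ^ ((1 + α) / 2) = y := by
      rw [← rpow_add hy]
      ring_nf
      exact rpow_one y
    have hsq (s : ℝ) : (y ^ (s / 2)) ^ 2 = y ^ s := by
      rw [← rpow_mul_natCast hy.le, Nat.cast_ofNat, div_mul_cancel₀ s two_ne_zero]
    have := two_mul_le_add_sq (y ^ ((1 - α) / 2)) (y ^ ((1 + α) / 2))
    rwa [mul_assoc, hprod, hsq, hsq] at this
  have hz_pos : z ^ α ≤ 1 + z := rpow_le_one_add hz.le hα₀ hα₁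
  have hz_neg : z ^ (-α) ≤ 1 + z ^ (1 - β) := by
    rcases le_total z 1 with h | h
    · linarith [rpow_le_rpow_of_exponent_ge hz h (by linarith : 1 - β ≤ -α)]
    · linarith [rpow_le_one_of_one_le_of_nonpos h (neg_nonpos.2 hα₀), rpow_nonneg hz.le (1 - β)]
  have hz_one : 0 ≤ z ^ (1 - β) := rpow_nonneg hz.le _
  calc y * K y z ≤ y * (2 + 1 * ((y / z) ^ α + (z / y) ^ α)) := by
        gcongr
        exact (hK.le hy hz).trans (by gcongr)
    _ = 2 * y + (y ^ (1 + α) * z ^ (-α) + y ^ (1 - α) * z ^ α) := by rw [← hsplit]; ring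
    _ ≤ (y ^ (1 - α) + y ^ (1 + α)) + (y ^ (1 + α) * (2 + z + z ^ (1 - β)) +
          y ^ (1 - α) * (2 + z + z ^ (1 - β))) := by
        gcongr
        · linarith
        · linarith
    _ = _ := by ring

lemma mul_le_of_lt_of_le_one (hK : IsNearConstantKernel α ε K) (hα₀ : 0 ≤ α) (hα₁ : α ≤ 1)
    (hαβ : α ≤ β - 1) (hε : ε ≤ 1) {x : ℝ} (hx : x ≤ 1) (hy : 0 < y) (hyx : y < x) (hz : 0 < z) :
    y * K y z ≤ 2 * x ^ (β - α) * y ^ (1 - β) * (3 + z + z ^ (1 - β)) := by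
  refine (hK.mul_le_of_le_one hα₀ hα₁ hαβ hε hy hz).trans ?_
  gcongr
  calc y ^ (1 - α) + y ^ (1 + α) ≤ y ^ (1 - α) + y ^ (1 - α) :=
        add_le_add le_rfl (rpow_le_rpow_of_exponent_ge hy (hyx.le.trans hx) (by linarith))
    _ = 2 * y ^ (β - α) * y ^ (1 - β) := by
        rw [mul_assoc, ← rpow_add hy, ← two_mul]
        ring_nf
    _ ≤ 2 * x ^ (β - α) * y ^ (1 - β) := by
        gcongr
        linarith

lemma mul_le_exp (hK : IsNearConstantKernel α ε K) (hα₀ : 0 ≤ α) (hα₁ : α ≤ 1)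
    (hαβ : α ≤ β - 1) (hε : ε ≤ 1) {a x : ℝ} (ha₀ : 0 < a) (ha₁ : a ≤ 1) (hy : 0 < y)
    (hz : 0 < z) (hx : x < y + z) :
    y * K y z ≤ 4 / a ^ 2 * exp (-(a * x)) * exp (2 * a * y) *
      (exp a * z ^ (1 - β) + (4 + 1 / a) * exp (2 * a * z)) := by
  have hy' : y ^ (1 - α) + y ^ (1 + α) ≤ 4 / a ^ 2 * exp (a * y) := by
    have h₁ := rpow_le_one_add_sq hy.le (by linarith : 0 ≤ 1 - α) (by linarith)
    have h₂ := rpow_le_one_add_sq hy.le (by linarith : 0 ≤ 1 + α) (by linarith)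
    have h₃ := one_add_sq_le_mul_exp ha₀ ha₁ hy.le
    linear_combination h₁ + h₂ + 2 * h₃
  calc y * K y z ≤ (y ^ (1 - α) + y ^ (1 + α)) * (3 + z + z ^ (1 - β)) :=
        hK.mul_le_of_le_one hα₀ hα₁ hαβ hε hy hz
    _ ≤ (y ^ (1 - α) + y ^ (1 + α)) * (3 + z + z ^ (1 - β)) * exp (a * (y + z - x)) :=
        le_mul_of_one_le_right (by positivity)
          (one_le_exp (mul_nonneg ha₀.le (by linarith)))
    _ ≤ 4 / a ^ 2 * exp (a * y) * (3 + z + z ^ (1 - β)) * exp (a * (y + z - x)) := by gcongr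
    _ = 4 / a ^ 2 * exp (-(a * x)) * exp (2 * a * y) *
          ((3 + z + z ^ (1 - β)) * exp (a * z)) := by
        rw [show a * (y + z - x) = -(a * x) + a * y + a * z by ring, two_mul a, add_mul, exp_add,
          exp_add, exp_add]
        ring
    _ ≤ _ := by
        gcongr
        exact add_rpow_mul_exp_le (by linarith) ha₀ hz

end IsNearConstantKernel

lemma measurableSet_crossing (x : ℝ) : MeasurableSet (crossing x) :=
  (measurableSet_lt measurable_fst measurable_const).inter
    (measurableSet_lt measurable_const (measurable_fst.add measurable_snd))

lemma flux_le_mul [SFinite μ] (hμ : ∀ᵐ x ∂μ, 0 < x) {u v : ℝ → ℝ} {x : ℝ} (hu : Measurable u)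
    (hv : Measurable v) (hu₀ : ∀ y, 0 < y → 0 ≤ u y)
    (hK : ∀ y z, 0 < y → 0 < z → y < x → x < y + z → y * K y z ≤ u y * v z) :
    flux K μ x ≤ (∫⁻ y, ENNReal.ofReal (u y) ∂μ) * ∫⁻ z, ENNReal.ofReal (v z) ∂μ := calc
  flux K μ x ≤ ∫⁻ p in crossing x, ENNReal.ofReal (u p.1) * ENNReal.ofReal (v p.2) ∂(μ.prod μ) := by
    refine setLIntegral_mono_ae' (measurableSet_crossing x)
      ((ae_prod_pos hμ).mono fun p ⟨hy, hz⟩ hp ↦ ?_)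
    rw [← ENNReal.ofReal_mul (hu₀ _ hy)]
    exact ENNReal.ofReal_le_ofReal (hK _ _ hy hz hp.1 hp.2)
  _ ≤ ∫⁻ p, ENNReal.ofReal (u p.1) * ENNReal.ofReal (v p.2) ∂(μ.prod μ) :=
    setLIntegral_le_lintegral _ _
  _ = _ := lintegral_prod_mul hu.ennreal_ofReal.aemeasurable hv.ennreal_ofReal.aemeasurable

namespace IsWeakProfile

variable [SFinite μ] {β M : ℝ}

lemma flux_le_rpow (h : IsWeakProfile K μ) (hK : IsNearConstantKernel α ε K) (hα₀ : 0 ≤ α)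
    (hα₁ : α ≤ 1) (hαβ : α ≤ β - 1) (hε : ε ≤ 1) (hM₀ : 0 ≤ M)
    (hM : ∫⁻ x, ENNReal.ofReal (x ^ (1 - β)) ∂μ ≤ ENNReal.ofReal M) {x : ℝ} (hx₀ : 0 < x)
    (hx₁ : x ≤ 1) :
    flux K μ x ≤ ENNReal.ofReal (2 * M * (4 + M) * x ^ (β - α)) := by
  have hright : ∫⁻ z, ENNReal.ofReal (3 + z + z ^ (1 - β)) ∂μ ≤ ENNReal.ofReal (4 + M) := calc
    _ ≤ ∫⁻ z, (3 + ENNReal.ofReal z + ENNReal.ofReal (z ^ (1 - β))) ∂μ := by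
      refine lintegral_mono fun z ↦ ENNReal.ofReal_add_le.trans ?_
      gcongr
      exact ENNReal.ofReal_add_le.trans_eq (by rw [ENNReal.ofReal_ofNat])
    _ = 3 * μ univ + 1 + ∫⁻ z, ENNReal.ofReal (z ^ (1 - β)) ∂μ := by
      rw [lintegral_add_left (by fun_prop), lintegral_add_left measurable_const, lintegral_const,
        h.lintegral_id]
    _ ≤ 3 * 1 + 1 + ENNReal.ofReal M := by
      gcongr
      exact h.measure_univ_le_one hK
    _ = ENNReal.ofReal (4 + M) := by
      rw [ENNReal.ofReal_add (by norm_num) hM₀, ENNReal.ofReal_ofNat]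
      norm_num
  calc flux K μ x
      ≤ (∫⁻ y, ENNReal.ofReal (2 * x ^ (β - α) * y ^ (1 - β)) ∂μ) *
          ∫⁻ z, ENNReal.ofReal (3 + z + z ^ (1 - β)) ∂μ :=
        flux_le_mul h.ae_pos (by fun_prop) (by fun_prop) (fun y hy ↦ by positivity)
          fun y z hy hz hyx _ ↦ hK.mul_le_of_lt_of_le_one hα₀ hα₁ hαβ hε hx₁ hy hyx hz
    _ ≤ ENNReal.ofReal (2 * x ^ (β - α)) * ENNReal.ofReal M * ENNReal.ofReal (4 + M) := by
        gcongr
        simp_rw [ENNReal.ofReal_mul (by positivity : 0 ≤ 2 * x ^ (β - α))]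
        rw [lintegral_const_mul _ (by fun_prop)]
        gcongr
    _ = _ := by
        rw [← ENNReal.ofReal_mul (by positivity), ← ENNReal.ofReal_mul (by positivity)]
        ring_nf

lemma flux_le_exp (h : IsWeakProfile K μ) (hK : IsNearConstantKernel α ε K) (hα₀ : 0 ≤ α)
    (hα₁ : α ≤ 1) (hαβ : α ≤ β - 1) (hε : ε ≤ 1) (hM₀ : 0 ≤ M)
    (hM : ∫⁻ x, ENNReal.ofReal (x ^ (1 - β)) ∂μ ≤ ENNReal.ofReal M) {a E : ℝ} (ha₀ : 0 < a)
    (ha₁ : a ≤ 1) (hE₀ : 0 ≤ E)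
    (hE : ∫⁻ x, ENNReal.ofReal (exp (2 * a * x)) ∂μ ≤ ENNReal.ofReal E) (x : ℝ) :
    flux K μ x ≤
      ENNReal.ofReal (4 / a ^ 2 * E * (exp a * M + (4 + 1 / a) * E) * exp (-(a * x))) := by
  have hconst {c b : ℝ} {f : ℝ → ℝ} (hc : 0 ≤ c) (hf : Measurable f)
      (hb : ∫⁻ y, ENNReal.ofReal (f y) ∂μ ≤ ENNReal.ofReal b) :
      ∫⁻ y, ENNReal.ofReal (c * f y) ∂μ ≤ ENNReal.ofReal (c * b) := by
    simp_rw [ENNReal.ofReal_mul hc]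
    rw [lintegral_const_mul _ (by fun_prop)]
    gcongr
  calc flux K μ x
      ≤ (∫⁻ y, ENNReal.ofReal (4 / a ^ 2 * exp (-(a * x)) * exp (2 * a * y)) ∂μ) *
          ∫⁻ z, ENNReal.ofReal (exp a * z ^ (1 - β) + (4 + 1 / a) * exp (2 * a * z)) ∂μ :=
        flux_le_mul h.ae_pos (by fun_prop) (by fun_prop) (fun y _ ↦ by positivity)
          fun y z hy hz _ hx ↦ hK.mul_le_exp hα₀ hα₁ hαβ hε ha₀ ha₁ hy hz hx
    _ ≤ ENNReal.ofReal (4 / a ^ 2 * exp (-(a * x)) * E) *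
          ENNReal.ofReal (exp a * M + (4 + 1 / a) * E) := by
        gcongr
        · exact hconst (by positivity) (by fun_prop) hE
        · refine (lintegral_mono fun z ↦ ENNReal.ofReal_add_le).trans ?_
          rw [lintegral_add_left (by fun_prop), ENNReal.ofReal_add (by positivity) (by positivity)]
          gcongr
          · exact hconst (by positivity) (by fun_prop) hM
          · exact hconst (by positivity) (by fun_prop) hE
    _ = _ := by
        rw [← ENNReal.ofReal_mul (by positivity)]
        ring_nf

end IsWeakProfile

lemma rpow_add_sub_rpow_le {y z r : ℝ} (hy : 0 < y) (hyz : y ≤ z) (hr : 1 ≤ r) :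
    (y + z) ^ r - z ^ r ≤ r * y * (2 * z) ^ (r - 1) := by
  have hz : 0 < z := hy.trans_le hyz
  have hs : 0 < y + z := add_pos hy hz
  have hle_one : y / (y + z) ≤ 1 := div_le_one_of_le₀ (le_add_of_nonneg_right hz.le) hs.le
  have hbernoulli : (y + z) ^ r * (1 + r * -(y / (y + z))) ≤ z ^ r := calc
    _ ≤ (y + z) ^ r * (1 + -(y / (y + z))) ^ r := by
      gcongr
      exact one_add_mul_self_le_rpow_one_add (neg_le_neg hle_one) hr
    _ = z ^ r := by
      rw [← mul_rpow hs.le (by linarith)]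
      congr 1
      field_simp
      ring
  calc (y + z) ^ r - z ^ r ≤ r * y * ((y + z) ^ r / (y + z)) := by
        rw [sub_le_comm]
        refine hbernoulli.trans' (le_of_eq ?_)
        ring
    _ = r * y * (y + z) ^ (r - 1) := by rw [rpow_sub_one hs.ne']
    _ ≤ r * y * (2 * z) ^ (r - 1) := by
        gcongr
        linarith

namespace IsNearConstantKernel

variable {p y z : ℝ}

lemma mul_rpow_add_sub_le_of_le (hK : IsNearConstantKernel α ε K) (hα₀ : 0 ≤ α) (hαp : α ≤ p)
    (hε : ε ≤ 1) (hy : 0 < y) (hyz : y ≤ z) :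
    K y z * ((y + z) ^ (p + 1 - α) - y ^ (p + 1 - α) - z ^ (p + 1 - α)) ≤
      4 * (p + 1 - α) * 2 ^ (p - α) * (y ^ (1 - α) * z ^ p) := by
  have hz : 0 < z := hy.trans_le hyz
  have hK_le : K y z ≤ 4 * (z / y) ^ α := by
    have hone : 1 ≤ (z / y) ^ α := one_le_rpow ((one_le_div hy).2 hyz) hα₀
    have hle_one : (y / z) ^ α ≤ 1 := rpow_le_one (by positivity) (div_le_one_of_le₀ hyz hz.le) hα₀
    have : ε * ((y / z) ^ α + (z / y) ^ α) ≤ 1 * ((y / z) ^ α + (z / y) ^ α) := by gcongr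
    linarith [hK.le hy hz]
  have hadd : (y + z) ^ (p + 1 - α) - y ^ (p + 1 - α) - z ^ (p + 1 - α) ≤
      (p + 1 - α) * y * (2 * z) ^ (p - α) := by
    have h := rpow_add_sub_rpow_le (r := p + 1 - α) hy hyz (by linarith)
    rw [show p + 1 - α - 1 = p - α by ring] at h
    linarith [rpow_nonneg hy.le (p + 1 - α)]
  have hp : 0 ≤ p + 1 - α := by linarith
  calc _ ≤ 4 * (z / y) ^ α * ((p + 1 - α) * y * (2 * z) ^ (p - α)) :=
        (mul_le_mul_of_nonneg_left hadd (hK.nonneg hy hz)).trans (by gcongr)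
    _ = _ := by
        rw [div_rpow hz.le hy.le, mul_rpow zero_le_two hz.le, rpow_sub hz, rpow_sub hy, rpow_one]
        field_simp

lemma mul_rpow_add_sub_le (hK : IsNearConstantKernel α ε K) (hα₀ : 0 ≤ α) (hαp : α ≤ p)
    (hε : ε ≤ 1) (hy : 0 < y) (hz : 0 < z) :
    K y z * ((y + z) ^ (p + 1 - α) - y ^ (p + 1 - α) - z ^ (p + 1 - α)) ≤
      4 * (p + 1 - α) * 2 ^ (p - α) * (y ^ (1 - α) * z ^ p + y ^ p * z ^ (1 - α)) := by
  have hp : 0 ≤ p + 1 - α := by linarith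
  rcases le_total y z with hyz | hzy
  · refine (hK.mul_rpow_add_sub_le_of_le hα₀ hαp hε hy hyz).trans ?_
    gcongr
    exact le_add_of_nonneg_right (by positivity)
  · rw [hK.symm hy hz, add_comm y z, sub_right_comm]
    refine (hK.mul_rpow_add_sub_le_of_le hα₀ hαp hε hz hzy).trans ?_
    rw [mul_comm (z ^ (1 - α))]
    gcongr
    exact le_add_of_nonneg_left (by positivity)

end IsNearConstantKernel

namespace IsWeakProfile

variable [SFinite μ]

lemma two_mul_lintegral_rpow (h : IsWeakProfile K μ) (hK : IsNearConstantKernel α ε K) {q : ℝ}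
    (hq : 0 < q) :
    2 * ∫⁻ x, ENNReal.ofReal (x ^ (q + 1)) ∂μ = ∫⁻ p, ENNReal.ofReal (K p.1 p.2 *
      ((p.1 + p.2) ^ (q + 1) - p.1 ^ (q + 1) - p.2 ^ (q + 1)) / q) ∂(μ.prod μ) := by
  have hweak := h.two_mul_lintegral_eq hK.symm hK.nonneg (G := fun x ↦ x ^ q / q)
    (g := fun x ↦ x ^ (q - 1)) (by fun_prop) (by fun_prop)
    (fun x hx ↦ ((hasDerivAt_rpow_const (p := q) (Or.inl hx.ne')).div_const q).congr_deriv
      (mul_div_cancel_left₀ _ hq.ne'))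
    (fun x hx ↦ (continuousAt_rpow_const x _ (Or.inl (ne_of_gt hx))).continuousWithinAt)
    fun x hx ↦ rpow_nonneg hx.le _
  convert hweak using 1
  · congr 1
    refine lintegral_congr_ae (h.ae_pos.mono fun x hx ↦ ?_)
    dsimp only
    rw [← rpow_two, ← rpow_add hx]
    ring_nf
  · refine lintegral_congr_ae (h.ae_prod_pos.mono fun p ⟨hy, hz⟩ ↦ ?_)
    dsimp only
    rw [rpow_add_one (add_pos hy hz).ne', rpow_add_one hy.ne', rpow_add_one hz.ne']
    ring_nf

lemma lintegral_rpow_ne_top_of_le_one (h : IsWeakProfile K μ) (hK : IsNearConstantKernel α ε K)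
    {s : ℝ} (hs₀ : 0 ≤ s) (hs₁ : s ≤ 1) : ∫⁻ x, ENNReal.ofReal (x ^ s) ∂μ ≠ ∞ := by
  have := h.isFiniteMeasure hK
  have hint : Integrable (fun x ↦ 1 + x) μ := (integrable_const 1).add h.integrable_id
  refine ne_top_of_le_ne_top hint.lintegral_lt_top.ne (lintegral_mono_ae ?_)
  exact h.ae_pos.mono fun x hx ↦ ENNReal.ofReal_le_ofReal (rpow_le_one_add hx.le hs₀ hs₁)

lemma lintegral_rpow_ne_top_add (h : IsWeakProfile K μ) (hK : IsNearConstantKernel α ε K)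
    (hα₀ : 0 ≤ α) (hα₁ : α ≤ 1) (hε : ε ≤ 1) {p : ℝ} (hp : α < p)
    (hfin : ∫⁻ x, ENNReal.ofReal (x ^ p) ∂μ ≠ ∞) :
    ∫⁻ x, ENNReal.ofReal (x ^ (p + 1 - α)) ∂μ ≠ ∞ := by
  have hpα : 0 < p - α := sub_pos.2 hp
  set C : ℝ := 4 * (p + 1 - α) * 2 ^ (p - α) / (p - α)
  have hp' : 0 ≤ p + 1 - α := by linarith
  have hC : 0 ≤ C := by positivity
  have hweak := h.two_mul_lintegral_rpow hK hpα
  rw [show p - α + 1 = p + 1 - α by ring] at hweak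
  refine fun htop ↦ (?_ : 2 * ∫⁻ x, ENNReal.ofReal (x ^ (p + 1 - α)) ∂μ ≠ ∞)
    (by simp [htop])
  rw [hweak]
  have hfin' := h.lintegral_rpow_ne_top_of_le_one hK (sub_nonneg.2 hα₁) (sub_le_self 1 hα₀)
  have hprod (s t : ℝ) : ∫⁻ q, ENNReal.ofReal (q.1 ^ s) * ENNReal.ofReal (q.2 ^ t) ∂(μ.prod μ) =
      (∫⁻ x, ENNReal.ofReal (x ^ s) ∂μ) * ∫⁻ x, ENNReal.ofReal (x ^ t) ∂μ :=
    lintegral_prod_mul (f := fun x ↦ ENNReal.ofReal (x ^ s)) (g := fun x ↦ ENNReal.ofReal (x ^ t))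
      (by fun_prop) (by fun_prop)
  refine ne_top_of_le_ne_top (b := ∫⁻ q, ENNReal.ofReal C *
    (ENNReal.ofReal (q.1 ^ (1 - α)) * ENNReal.ofReal (q.2 ^ p) +
      ENNReal.ofReal (q.1 ^ p) * ENNReal.ofReal (q.2 ^ (1 - α))) ∂(μ.prod μ)) ?_ ?_
  · rw [lintegral_const_mul _ (by fun_prop), lintegral_add_left (by fun_prop), hprod, hprod]
    finiteness
  · refine lintegral_mono_ae (h.ae_prod_pos.mono fun q ⟨hy, hz⟩ ↦ ?_)
    rw [← ENNReal.ofReal_mul (by positivity), ← ENNReal.ofReal_mul (by positivity),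
      ← ENNReal.ofReal_add (by positivity) (by positivity), ← ENNReal.ofReal_mul hC]
    refine ENNReal.ofReal_le_ofReal ?_
    rw [div_mul_eq_mul_div]
    exact div_le_div_of_nonneg_right (hK.mul_rpow_add_sub_le hα₀ hp.le hε hy hz) hpα.le

lemma lintegral_pow_ne_top (h : IsWeakProfile K μ) (hK : IsNearConstantKernel α ε K)
    (hα₀ : 0 ≤ α) (hα₁ : α < 1) (hε : ε ≤ 1) (n : ℕ) :
    ∫⁻ x, ENNReal.ofReal (x ^ n) ∂μ ≠ ∞ := by
  have hα : 0 < 1 - α := sub_pos.2 hα₁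
  have hfin (j : ℕ) : ∫⁻ x, ENNReal.ofReal (x ^ (1 + j * (1 - α))) ∂μ ≠ ∞ := by
    induction j with
    | zero => simp [h.lintegral_id]
    | succ j ih =>
      have hlt : α < 1 + j * (1 - α) := by
        have : 0 ≤ j * (1 - α) := by positivity
        linarith
      convert h.lintegral_rpow_ne_top_add hK hα₀ hα₁.le hε hlt ih using 6
      push_cast
      ring
  obtain ⟨j, hj⟩ := exists_nat_ge (n / (1 - α))
  rw [div_le_iff₀ hα] at hj
  have hle (x : ℝ) (hx : 0 < x) : ENNReal.ofReal (x ^ n) ≤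
      1 + ENNReal.ofReal (x ^ (1 + j * (1 - α))) := by
    rcases le_total x 1 with hx₁ | hx₁
    · exact le_add_right (ENNReal.ofReal_le_one.2 (pow_le_one₀ hx.le hx₁))
    · refine le_add_left (ENNReal.ofReal_le_ofReal ?_)
      rw [← rpow_natCast]
      exact rpow_le_rpow_of_exponent_le hx₁ (by linarith)
  have := h.isFiniteMeasure hK
  refine ne_top_of_le_ne_top ?_ (lintegral_mono_ae (h.ae_pos.mono hle))
  rw [lintegral_add_left measurable_const, lintegral_const, one_mul]
  exact ENNReal.add_ne_top.2 ⟨measure_ne_top _ _, hfin j⟩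

end IsWeakProfile

section FactorialMoments

open scoped Nat

section Antidiagonal

open Finset Finset.Nat

lemma add_pow_sub_div_factorial {F : Type*} [Field F] [CharZero F] (N : ℕ) (y z : F) :
    ((y + z) ^ (N + 2) - y ^ (N + 2) - z ^ (N + 2)) / (N + 2)! =
      ∑ p ∈ antidiagonal N,
        y ^ (p.1 + 1) / (p.1 + 1)! * (z ^ (p.2 + 1) / (p.2 + 1)!) := by
  have hbinom : (y + z) ^ (N + 2) / (N + 2)! =
      ∑ p ∈ antidiagonal (N + 2), y ^ p.1 / p.1 ! * (z ^ p.2 / p.2 !) := by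
    rw [(Commute.all y z).add_pow', Finset.sum_div]
    refine sum_congr rfl fun p hp ↦ ?_
    rw [HasAntidiagonal.mem_antidiagonal] at hp
    have hchoose : ((p.1 + p.2).choose p.1 : F) * p.1 ! * p.2 ! = (p.1 + p.2)! := by
      rw [Nat.choose_symm_add]
      exact_mod_cast Nat.add_choose_mul_factorial_mul_factorial p.1 p.2
    have h₁ : (p.1 ! : F) ≠ 0 := by exact_mod_cast p.1.factorial_ne_zero
    have h₂ : (p.2 ! : F) ≠ 0 := by exact_mod_cast p.2.factorial_ne_zero
    have h₃ : ((p.1 + p.2)! : F) ≠ 0 := by exact_mod_cast (p.1 + p.2).factorial_ne_zero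
    rw [← hp, nsmul_eq_mul, div_mul_div_comm, div_eq_div_iff h₃ (mul_ne_zero h₁ h₂), ← hchoose]
    ring
  rw [antidiagonal_succ_succ'] at hbinom
  simp only [sum_cons, sum_map, Function.Embedding.prodMap, Function.Embedding.coeFn_mk,
    Prod.map, pow_zero, Nat.factorial_zero, Nat.cast_one, div_one, one_mul, mul_one,
    Nat.succ_eq_add_one] at hbinom
  rw [sub_div, sub_div, hbinom]
  ring

lemma sum_antidiagonal_add_two_mul_le {R : Type*} [CommSemiring R] [PartialOrder R]
    [CanonicallyOrderedAdd R] (m : ℕ → R) (N : ℕ) :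
    ∑ p ∈ antidiagonal N, m (p.1 + 2) * m p.2 ≤
      m (N + 2) * m 0 + ∑ p ∈ antidiagonal N, m (p.1 + 1) * m (p.2 + 1) := by
  have hleft := sum_antidiagonal_succ (n := N) (f := fun p ↦ m (p.1 + 1) * m p.2)
  have hright := sum_antidiagonal_succ' (n := N) (f := fun p ↦ m (p.1 + 1) * m p.2)
  exact le_add_self.trans_eq (hleft.symm.trans hright)

lemma catalan_le_four_pow (n : ℕ) : catalan n ≤ 4 ^ n := by
  rw [catalan_eq_centralBinom_div, Nat.centralBinom_eq_two_mul_choose, show 4 = 2 ^ 2 by rfl,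
    ← pow_mul]
  exact (Nat.div_le_self _ _).trans (Nat.choose_le_two_pow _ _)

lemma le_pow_mul_catalan {R : Type*} [CommSemiring R] [PartialOrder R] [CanonicallyOrderedAdd R]
    [IsOrderedRing R] {m : ℕ → R} {c : R} (hm₁ : m 1 ≤ 1)
    (hm : ∀ N, m (N + 2) ≤ c * ∑ p ∈ antidiagonal N, m (p.1 + 1) * m (p.2 + 1)) (n : ℕ) :
    m (n + 1) ≤ c ^ n * catalan n := by
  induction n using Nat.strong_induction_on with
  | _ n ih =>
    rcases n with _ | N
    · simpa using hm₁
    · calc m (N + 2) ≤ c * ∑ p ∈ antidiagonal N, m (p.1 + 1) * m (p.2 + 1) := hm N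
        _ ≤ c * ∑ p ∈ antidiagonal N, c ^ N * (catalan p.1 * catalan p.2) := by
          gcongr c * ?_
          refine sum_le_sum fun p hp ↦ ?_
          rw [HasAntidiagonal.mem_antidiagonal] at hp
          calc m (p.1 + 1) * m (p.2 + 1) ≤ c ^ p.1 * catalan p.1 * (c ^ p.2 * catalan p.2) := by
                gcongr
                · exact ih _ (by omega)
                · exact ih _ (by omega)
            _ = c ^ N * (catalan p.1 * catalan p.2) := by rw [← hp, pow_add]; ring
        _ = c ^ (N + 1) * catalan (N + 1) := by
          rw [catalan_succ', ← mul_sum, pow_succ', mul_assoc]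
          push_cast
          rfl

lemma le_eight_pow_of_recursion {m : ℕ → ℝ≥0∞} (hm₀ : m 0 ≤ 1) (hm₁ : m 1 ≤ 1)
    (hfin : ∀ n, m n ≠ ∞)
    (hm : ∀ N, 8 * m (N + 2) ≤ ∑ p ∈ antidiagonal N,
      (9 * (m (p.1 + 1) * m (p.2 + 1)) + m (p.1 + 2) * m p.2 + m p.1 * m (p.2 + 2))) (n : ℕ) :
    m n ≤ 8 ^ n := by
  have hrec (N : ℕ) : m (N + 2) ≤ 2 * ∑ p ∈ antidiagonal N, m (p.1 + 1) * m (p.2 + 1) := by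
    set S := ∑ p ∈ antidiagonal N, m (p.1 + 1) * m (p.2 + 1)
    have hshift : ∑ p ∈ antidiagonal N, m (p.1 + 2) * m p.2 ≤ m (N + 2) + S :=
      (sum_antidiagonal_add_two_mul_le m N).trans (by gcongr; exact mul_le_of_le_one_right' hm₀)
    have hshift' : ∑ p ∈ antidiagonal N, m p.1 * m (p.2 + 2) ≤ m (N + 2) + S := by
      rw [← sum_antidiagonal_swap]
      simpa only [Prod.fst_swap, Prod.snd_swap, mul_comm] using hshift
    have hle : 6 * m (N + 2) + 2 * m (N + 2) ≤ 6 * (2 * S) + 2 * m (N + 2) := calc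
      6 * m (N + 2) + 2 * m (N + 2) = 8 * m (N + 2) := by ring
      _ ≤ 9 * S + (m (N + 2) + S) + (m (N + 2) + S) := by
        refine (hm N).trans ?_
        rw [sum_add_distrib, sum_add_distrib, ← mul_sum]
        gcongr
      _ = 11 * S + 2 * m (N + 2) := by ring
      _ ≤ 12 * S + 2 * m (N + 2) := by gcongr; norm_num
      _ = 6 * (2 * S) + 2 * m (N + 2) := by ring
    rw [ENNReal.add_le_add_iff_right (ENNReal.mul_ne_top (by simp) (hfin _))] at hle
    exact (ENNReal.mul_le_mul_iff_right (by simp) (by simp)).1 hle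
  rcases n with _ | n
  · simpa using hm₀
  · calc m (n + 1) ≤ 2 ^ n * catalan n := le_pow_mul_catalan hm₁ hrec n
      _ ≤ 2 ^ n * 4 ^ n := by
        gcongr
        exact_mod_cast catalan_le_four_pow n
      _ = 8 ^ n := by rw [← mul_pow]; norm_num
      _ ≤ 8 ^ (n + 1) := pow_le_pow_right₀ (by norm_num) n.le_succ

lemma div_mul_pow_div_factorial_le {y z : ℝ} (hy : 0 < y) (hz : 0 < z) (i j : ℕ) :
    y / z * (y ^ (i + 1) / (i + 1)! * (z ^ (j + 1) / (j + 1)!)) ≤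
      2 * (i + j + 1) * (y ^ (i + 2) / (i + 2)! * (z ^ j / j !)) := by
  have hshift : y / z * (y ^ (i + 1) / (i + 1)! * (z ^ (j + 1) / (j + 1)!)) =
      (i + 2) / (j + 1) * (y ^ (i + 2) / (i + 2)! * (z ^ j / j !)) := by
    rw [Nat.factorial_succ (i + 1), Nat.factorial_succ j]
    push_cast
    field_simp
    ring
  rw [hshift]
  gcongr
  rw [div_le_iff₀ (by positivity)]
  have : 0 ≤ (i : ℝ) * j := by positivity
  have : 0 ≤ (j : ℝ) ^ 2 := by positivity
  have : (0 : ℝ) ≤ i := i.cast_nonneg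
  have : (0 : ℝ) ≤ j := j.cast_nonneg
  linarith

lemma IsNearConstantKernel.mul_pow_add_sub_le (hK : IsNearConstantKernel α ε K) (hα₀ : 0 ≤ α)
    (hα₁ : α ≤ 1) (hε : ε ≤ 1 / 8) {y z : ℝ} (hy : 0 < y) (hz : 0 < z) (N : ℕ) :
    4 / (N + 2)! * (K y z * ((y + z) ^ (N + 2) - y ^ (N + 2) - z ^ (N + 2)) / (N + 1)) ≤
      ∑ p ∈ antidiagonal N,
        (9 * (y ^ (p.1 + 1) / (p.1 + 1)! * (z ^ (p.2 + 1) / (p.2 + 1)!)) +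
          y ^ (p.1 + 2) / (p.1 + 2)! * (z ^ p.2 / p.2 !) +
          y ^ p.1 / p.1 ! * (z ^ (p.2 + 2) / (p.2 + 2)!)) := by
  have hK_le : 4 * K y z ≤ 9 + (y / z + z / y) / 2 := by
    have hyz := rpow_le_one_add (div_pos hy hz).le hα₀ hα₁
    have hzy := rpow_le_one_add (div_pos hz hy).le hα₀ hα₁
    have : ε * ((y / z) ^ α + (z / y) ^ α) ≤ 1 / 8 * ((1 + y / z) + (1 + z / y)) := by gcongr
    linarith [hK.le hy hz]
  calc _ = ∑ p ∈ antidiagonal N, 4 * K y z *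
          (y ^ (p.1 + 1) / (p.1 + 1)! * (z ^ (p.2 + 1) / (p.2 + 1)!)) / (N + 1) := by
        rw [← sum_div, ← mul_sum, ← add_pow_sub_div_factorial]
        ring
    _ ≤ _ := by
        refine sum_le_sum fun ⟨i, j⟩ hp ↦ ?_
        have hN : (N : ℝ) = i + j := by
          rw [← HasAntidiagonal.mem_antidiagonal.1 hp, Nat.cast_add]
        have hy_shift := div_mul_pow_div_factorial_le hy hz i j
        have hz_shift := div_mul_pow_div_factorial_le hz hy j i
        rw [div_le_iff₀ (by positivity), hN]
        dsimp only
        set t := y ^ (i + 1) / (i + 1)! * (z ^ (j + 1) / (j + 1)!)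
        have ht : 0 ≤ t := by positivity
        have ht_le : t ≤ t * (i + j + 1) :=
          le_mul_of_one_le_right ht (le_add_of_nonneg_left (by positivity))
        calc 4 * K y z * t ≤ (9 + (y / z + z / y) / 2) * t := by gcongr
          _ = 9 * t + (y / z * t +
                z / y * (z ^ (j + 1) / (j + 1)! * (y ^ (i + 1) / (i + 1)!))) / 2 := by ring
          _ ≤ 9 * (t * (i + j + 1)) + (2 * (i + j + 1) * (y ^ (i + 2) / (i + 2)! * (z ^ j / j !)) +
                2 * (j + i + 1) * (z ^ (j + 2) / (j + 2)! * (y ^ i / i !))) / 2 := by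
            linarith
          _ = _ := by ring

end Antidiagonal

/-- The moment of order `n` of `μ`, divided by `n!`; the moment generating function of `μ` has these
coefficients. -/
noncomputable def factorialMoment (μ : Measure ℝ) (n : ℕ) : ℝ≥0∞ :=
  ∫⁻ x, ENNReal.ofReal (x ^ n / n !) ∂μ

lemma factorialMoment_eq_mul (μ : Measure ℝ) (n : ℕ) :
    factorialMoment μ n = ENNReal.ofReal (1 / n !) * ∫⁻ x, ENNReal.ofReal (x ^ n) ∂μ := by
  rw [factorialMoment, ← lintegral_const_mul _ (by fun_prop)]
  refine lintegral_congr fun x ↦ ?_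
  rw [← ENNReal.ofReal_mul (by positivity), one_div_mul_eq_div]

lemma lintegral_exp_mul_eq_tsum (hμ : ∀ᵐ x ∂μ, 0 < x) {b : ℝ} (hb : 0 ≤ b) :
    ∫⁻ x, ENNReal.ofReal (exp (b * x)) ∂μ = ∑' n, ENNReal.ofReal b ^ n * factorialMoment μ n := by
  have hexp : ∀ᵐ x ∂μ, ENNReal.ofReal (exp (b * x)) =
      ∑' n : ℕ, ENNReal.ofReal b ^ n * ENNReal.ofReal (x ^ n / n !) := by
    filter_upwards [hμ] with x hx
    have hsum := NormedSpace.expSeries_div_hasSum_exp (b * x)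
    rw [← exp_eq_exp_ℝ] at hsum
    rw [← hsum.tsum_eq, ENNReal.ofReal_tsum_of_nonneg (fun n ↦ by positivity) hsum.summable]
    refine tsum_congr fun n ↦ ?_
    rw [← ENNReal.ofReal_pow hb, ← ENNReal.ofReal_mul (by positivity), mul_pow, mul_div_assoc]
  rw [lintegral_congr_ae hexp, lintegral_tsum fun n ↦ by fun_prop]
  exact tsum_congr fun n ↦ lintegral_const_mul _ (by fun_prop)

namespace IsWeakProfile

variable [SFinite μ]

lemma eight_mul_factorialMoment_le (h : IsWeakProfile K μ) (hK : IsNearConstantKernel α ε K)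
    (hα₀ : 0 ≤ α) (hα₁ : α ≤ 1) (hε : ε ≤ 1 / 8) (N : ℕ) :
    8 * factorialMoment μ (N + 2) ≤ ∑ p ∈ Finset.HasAntidiagonal.antidiagonal N,
      (9 * (factorialMoment μ (p.1 + 1) * factorialMoment μ (p.2 + 1)) +
        factorialMoment μ (p.1 + 2) * factorialMoment μ p.2 +
        factorialMoment μ p.1 * factorialMoment μ (p.2 + 2)) := by
  set e : ℕ → ℝ → ℝ≥0∞ := fun n x ↦ ENNReal.ofReal (x ^ n / n !)
  have hprod (i j : ℕ) : ∫⁻ q, e i q.1 * e j q.2 ∂(μ.prod μ) =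
      factorialMoment μ i * factorialMoment μ j :=
    lintegral_prod_mul (by fun_prop) (by fun_prop)
  have hweak := h.two_mul_lintegral_rpow hK (q := N + 1) (by positivity)
  simp_rw [show (N : ℝ) + 1 + 1 = (N + 2 : ℕ) by push_cast; ring, rpow_natCast] at hweak
  calc 8 * factorialMoment μ (N + 2)
      = ENNReal.ofReal (4 / (N + 2)!) * (2 * ∫⁻ x, ENNReal.ofReal (x ^ (N + 2)) ∂μ) := by
        rw [factorialMoment_eq_mul, show (4 : ℝ) / (N + 2)! = 4 * (1 / (N + 2)!) by ring,
          ENNReal.ofReal_mul zero_le_four, ENNReal.ofReal_ofNat]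
        ring
    _ ≤ ∫⁻ q, ∑ p ∈ Finset.HasAntidiagonal.antidiagonal N,
          (9 * (e (p.1 + 1) q.1 * e (p.2 + 1) q.2) + e (p.1 + 2) q.1 * e p.2 q.2 +
            e p.1 q.1 * e (p.2 + 2) q.2) ∂(μ.prod μ) := by
        rw [hweak, ← lintegral_const_mul' _ _ ENNReal.ofReal_ne_top]
        refine lintegral_mono_ae (h.ae_prod_pos.mono fun q ⟨hy, hz⟩ ↦ ?_)
        rw [← ENNReal.ofReal_mul (by positivity)]
        refine (ENNReal.ofReal_le_ofReal
          (hK.mul_pow_add_sub_le hα₀ hα₁ hε hy hz N)).trans_eq ?_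
        rw [ENNReal.ofReal_sum_of_nonneg fun p _ ↦ by positivity]
        refine Finset.sum_congr rfl fun p _ ↦ ?_
        rw [ENNReal.ofReal_add (by positivity) (by positivity),
          ENNReal.ofReal_add (by positivity) (by positivity), ENNReal.ofReal_mul (by positivity),
          ENNReal.ofReal_mul (by positivity), ENNReal.ofReal_mul (by positivity),
          ENNReal.ofReal_mul (by positivity), ENNReal.ofReal_ofNat]
    _ = _ := by
        rw [lintegral_finsetSum _ fun p _ ↦ by fun_prop]
        refine Finset.sum_congr rfl fun p _ ↦ ?_
        rw [lintegral_add_left (by fun_prop), lintegral_add_left (by fun_prop),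
          lintegral_const_mul _ (by fun_prop), hprod, hprod, hprod]

lemma factorialMoment_le_eight_pow (h : IsWeakProfile K μ) (hK : IsNearConstantKernel α ε K)
    (hα₀ : 0 ≤ α) (hα₁ : α < 1) (hε : ε ≤ 1 / 8) (n : ℕ) : factorialMoment μ n ≤ 8 ^ n := by
  refine le_eight_pow_of_recursion ?_ ?_ (fun n ↦ ?_)
    (h.eight_mul_factorialMoment_le hK hα₀ hα₁.le hε) n
  · simpa [factorialMoment] using h.measure_univ_le_one hK
  · simp [factorialMoment, h.lintegral_id]
  · rw [factorialMoment_eq_mul]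
    exact ENNReal.mul_ne_top ENNReal.ofReal_ne_top
      (h.lintegral_pow_ne_top hK hα₀ hα₁ (by linarith) n)

lemma lintegral_exp_div_sixteen_le (h : IsWeakProfile K μ) (hK : IsNearConstantKernel α ε K)
    (hα₀ : 0 ≤ α) (hα₁ : α < 1) (hε : ε ≤ 1 / 8) :
    ∫⁻ x, ENNReal.ofReal (exp (1 / 16 * x)) ∂μ ≤ 2 := by
  rw [lintegral_exp_mul_eq_tsum h.ae_pos (by norm_num), ← ENNReal.tsum_geometric_two]
  refine ENNReal.tsum_le_tsum fun n ↦ ?_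
  calc ENNReal.ofReal (1 / 16) ^ n * factorialMoment μ n
      ≤ ENNReal.ofReal (1 / 16) ^ n * ENNReal.ofReal 8 ^ n := by
        gcongr
        simpa using h.factorialMoment_le_eight_pow hK hα₀ hα₁ hε n
    _ = 2⁻¹ ^ n := by
        rw [← mul_pow, ← ENNReal.ofReal_mul (by norm_num), show (1 / 16 : ℝ) * 8 = 2⁻¹ by norm_num,
          ENNReal.ofReal_inv_of_pos two_pos, ENNReal.ofReal_ofNat]

end IsWeakProfile

end FactorialMoments

section Tonelli

variable {X Y : Type*} [MeasurableSpace X] [MeasurableSpace Y]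

/- Where the outer integral diverges, both sides take the junk value `0`. -/
lemma integral_integral_eq_toReal_lintegral_prod {ρ : Measure X} {σ : Measure Y} [SFinite ρ]
    [SFinite σ] {f : X × Y → ℝ} (hf : AEMeasurable f (ρ.prod σ)) (hf₀ : ∀ᵐ p ∂ρ.prod σ, 0 ≤ f p)
    (hfin : ∀ᵐ x ∂ρ, ∫⁻ y, ENNReal.ofReal (f (x, y)) ∂σ ≠ ∞) :
    ∫ x, ∫ y, f (x, y) ∂σ ∂ρ = (∫⁻ p, ENNReal.ofReal (f p) ∂ρ.prod σ).toReal := by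
  have hinner : ∀ᵐ x ∂ρ,
      ∫ y, f (x, y) ∂σ = (∫⁻ y, ENNReal.ofReal (f (x, y)) ∂σ).toReal := by
    filter_upwards [hf.aestronglyMeasurable.prodMk_left, Measure.ae_ae_of_ae_prod hf₀]
      with x hfx hfx₀
    exact integral_eq_lintegral_of_nonneg_ae hfx₀ hfx
  rw [integral_congr_ae hinner, integral_toReal hf.ennreal_ofReal.lintegral_prod_right'
    (hfin.mono fun _ ↦ Ne.lt_top), lintegral_prod _ hf.ennreal_ofReal]

end Tonelli

section Flux

lemma flux_eq_lintegral_indicator (x : ℝ) : flux K μ x =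
    ∫⁻ p, (crossing x).indicator (fun p ↦ ENNReal.ofReal (p.1 * K p.1 p.2)) p ∂(μ.prod μ) :=
  (lintegral_indicator (measurableSet_crossing x) _).symm

lemma aemeasurable_indicator_crossing [SFinite μ]
    (hK : AEMeasurable (Function.uncurry K) (μ.prod μ)) {ρ : Measure ℝ} :
    AEMeasurable (fun q : ℝ × ℝ × ℝ ↦ (crossing q.1).indicator
      (fun p ↦ ENNReal.ofReal (p.1 * K p.1 p.2)) q.2) (ρ.prod (μ.prod μ)) :=
  (measurable_fst.aemeasurable.mul hK).ennreal_ofReal.comp_snd.indicator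
    (s := {q | q.2.1 < q.1 ∧ q.1 < q.2.1 + q.2.2}) (by measurability)

lemma aemeasurable_flux [SFinite μ] (hK : AEMeasurable (Function.uncurry K) (μ.prod μ))
    {ρ : Measure ℝ} : AEMeasurable (flux K μ) ρ := by
  simp_rw [funext flux_eq_lintegral_indicator]
  exact (aemeasurable_indicator_crossing hK).lintegral_prod_right'

lemma lintegral_flux_mul [SFinite μ] (hK : AEMeasurable (Function.uncurry K) (μ.prod μ))
    {ρ : Measure ℝ} [SFinite ρ] {g : ℝ → ℝ≥0∞} (hg : Measurable g) :
    ∫⁻ x, flux K μ x * g x ∂ρ = ∫⁻ p, ENNReal.ofReal (p.1 * K p.1 p.2) *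
      (∫⁻ x in Ioo p.1 (p.1 + p.2), g x ∂ρ) ∂(μ.prod μ) := by
  set k : ℝ × ℝ → ℝ≥0∞ := fun p ↦ ENNReal.ofReal (p.1 * K p.1 p.2)
  have hk : AEMeasurable k (μ.prod μ) := (measurable_fst.aemeasurable.mul hK).ennreal_ofReal
  calc ∫⁻ x, flux K μ x * g x ∂ρ
      = ∫⁻ x, (∫⁻ p, (crossing x).indicator k p * g x ∂(μ.prod μ)) ∂ρ := by
        refine lintegral_congr fun x ↦ ?_
        rw [flux_eq_lintegral_indicator,
          lintegral_mul_const'' _ (hk.indicator (measurableSet_crossing x))]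
    _ = ∫⁻ p, (∫⁻ x, (crossing x).indicator k p * g x ∂ρ) ∂(μ.prod μ) :=
        lintegral_lintegral_swap
          ((aemeasurable_indicator_crossing hK).mul (hg.comp measurable_fst).aemeasurable)
    _ = _ := by
        refine lintegral_congr fun p ↦ ?_
        rw [← lintegral_const_mul _ hg, ← lintegral_indicator measurableSet_Ioo]
        exact lintegral_congr fun x ↦ (indicator_mul_left (crossing x) k fun _ ↦ g x).symm

lemma IsNearConstantKernel.exists_le_mul (hK : IsNearConstantKernel α ε K) (hα₀ : 0 ≤ α)
    (hα₁ : α ≤ 1) {r R : ℝ} (hr : 0 < r) (hR : 0 ≤ R) :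
    ∃ C, 0 ≤ C ∧ ∀ y z, r ≤ y → y ≤ R → r ≤ z → K y z ≤ C * z := by
  have hε := hK.eps_nonneg
  refine ⟨(2 + 3 * ε + ε * (R / r)) / r, by positivity, fun y z hry hyR hz ↦ ?_⟩
  have hy₀ : 0 < y := hr.trans_le hry
  have hz₀ : 0 < z := hr.trans_le hz
  have hz_one : 1 ≤ z / r := (one_le_div hr).2 hz
  calc K y z ≤ 2 + ε * ((1 + y / z) + (1 + z / y)) := by
        grw [hK.le hy₀ hz₀, rpow_le_one_add (div_pos hy₀ hz₀).le hα₀ hα₁,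
          rpow_le_one_add (div_pos hz₀ hy₀).le hα₀ hα₁]
    _ ≤ 2 + ε * ((1 + R / r) + (1 + z / r)) := by gcongr
    _ = (2 + 2 * ε + ε * (R / r)) * 1 + ε * (z / r) := by ring
    _ ≤ (2 + 2 * ε + ε * (R / r)) * (z / r) + ε * (z / r) := by gcongr
    _ = (2 + 3 * ε + ε * (R / r)) / r * z := by ring

lemma IsNearConstantKernel.ofReal_mul_mul_swap (hK : IsNearConstantKernel α ε K) {y z : ℝ}
    (hy : 0 < y) (hz : 0 < z) :
    ENNReal.ofReal (y * K y z) * ENNReal.ofReal z =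
      ENNReal.ofReal y * ENNReal.ofReal (z * K z y) := by
  rw [hK.symm hz hy, ENNReal.ofReal_mul hy.le, ENNReal.ofReal_mul hz.le]
  ring

/- A merger which carries mass across a size in `(x, R)` crosses `x`, or crosses `x` once the two
sizes are exchanged, or involves two sizes above `x`, where the kernel is at most linear. -/
lemma IsNearConstantKernel.exists_mul_volume_le (hK : IsNearConstantKernel α ε K) (hα₀ : 0 ≤ α)
    (hα₁ : α ≤ 1) {x R : ℝ} (hx : 0 < x) (hR : 0 ≤ R) :
    ∃ C : ℝ, ∀ p : ℝ × ℝ, 0 < p.1 → 0 < p.2 →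
      ENNReal.ofReal (p.1 * K p.1 p.2) * volume (Ioo p.1 (p.1 + p.2) ∩ Ioo x R) ≤
        ENNReal.ofReal R * ((crossing x).indicator (fun p ↦ ENNReal.ofReal (p.1 * K p.1 p.2)) p +
          (crossing x).indicator (fun p ↦ ENNReal.ofReal (p.1 * K p.1 p.2)) p.swap +
          ENNReal.ofReal C * (ENNReal.ofReal p.1 * ENNReal.ofReal p.2)) := by
  obtain ⟨C, hC₀, hC⟩ := hK.exists_le_mul hα₀ hα₁ hx hR
  refine ⟨C, ?_⟩
  rintro ⟨y, z⟩ (hy : 0 < y) (hz : 0 < z)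
  dsimp only [Prod.swap_prod_mk]
  set k : ℝ × ℝ → ℝ≥0∞ := fun p ↦ ENNReal.ofReal (p.1 * K p.1 p.2)
  change k (y, z) * _ ≤ _
  set ℓ := volume (Ioo y (y + z) ∩ Ioo x R)
  have hℓ_le_R : ℓ ≤ ENNReal.ofReal R :=
    (measure_mono (inter_subset_right.trans (Ioo_subset_Ioo_left hx.le))).trans_eq (by simp)
  have hℓ_le_z : ℓ ≤ ENNReal.ofReal z := (measure_mono inter_subset_left).trans_eq (by simp)
  have hℓ_zero (hdisj : min (y + z) R ≤ max y x) : ℓ = 0 := by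
    simpa [ℓ, Ioo_inter_Ioo, sub_nonpos] using hdisj
  rcases lt_or_ge y x with hyx | hxy
  · rcases le_or_gt (y + z) x with hyz | hyz
    · simp [hℓ_zero ((min_le_left _ _).trans (hyz.trans (le_max_right _ _)))]
    · have hmem : (y, z) ∈ crossing x := ⟨hyx, hyz⟩
      grw [indicator_of_mem hmem, mul_comm, hℓ_le_R, add_assoc, ← le_self_add]
  rcases le_or_gt R y with hRy | hyR
  · simp [hℓ_zero ((min_le_right _ _).trans (hRy.trans (le_max_left _ _)))]
  rcases lt_or_ge z x with hzx | hxz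
  · have hmem : (z, y) ∈ crossing x := ⟨hzx, by simpa using by linarith⟩
    calc k (y, z) * ℓ ≤ k (y, z) * ENNReal.ofReal z := by gcongr
      _ = ENNReal.ofReal y * k (z, y) := hK.ofReal_mul_mul_swap hy hz
      _ ≤ ENNReal.ofReal R * (crossing x).indicator k (z, y) := by
        rw [indicator_of_mem hmem]
        gcongr
      _ ≤ _ := by
        gcongr
        exact le_add_self.trans le_self_add
  · calc k (y, z) * ℓ ≤ ENNReal.ofReal (y * (C * z)) * ENNReal.ofReal R := by
          gcongr
          exact ENNReal.ofReal_le_ofReal (by gcongr; exact hC y z hxy hyR.le hxz)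
      _ = ENNReal.ofReal R * (ENNReal.ofReal C * (ENNReal.ofReal y * ENNReal.ofReal z)) := by
          rw [ENNReal.ofReal_mul hy.le, ENNReal.ofReal_mul hC₀]
          ring
      _ ≤ _ := by
          gcongr
          exact le_add_self

lemma IsNearConstantKernel.setLIntegral_flux_ne_top [SFinite μ]
    (hK : IsNearConstantKernel α ε K) (hα₀ : 0 ≤ α) (hα₁ : α ≤ 1)
    (hKm : AEMeasurable (Function.uncurry K) (μ.prod μ)) (hμ : ∀ᵐ x ∂μ, 0 < x)
    (hmass : ∫⁻ x, ENNReal.ofReal x ∂μ ≠ ∞) {x : ℝ} (hx : 0 < x) (hflux : flux K μ x ≠ ∞)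
    (R : ℝ) : ∫⁻ t in Ioo x R, flux K μ t ≠ ∞ := by
  rcases lt_or_ge R 0 with hR | hR
  · simp [Ioo_eq_empty_of_le (hR.le.trans hx.le)]
  obtain ⟨C, hC⟩ := hK.exists_mul_volume_le hα₀ hα₁ hx hR
  set k : ℝ × ℝ → ℝ≥0∞ := (crossing x).indicator fun p ↦ ENNReal.ofReal (p.1 * K p.1 p.2)
  have hk : AEMeasurable k (μ.prod μ) :=
    (measurable_fst.aemeasurable.mul hKm).ennreal_ofReal.indicator (measurableSet_crossing x)
  have hprod : ∫⁻ p, ENNReal.ofReal p.1 * ENNReal.ofReal p.2 ∂(μ.prod μ) =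
      (∫⁻ x, ENNReal.ofReal x ∂μ) * ∫⁻ x, ENNReal.ofReal x ∂μ :=
    lintegral_prod_mul (by fun_prop) (by fun_prop)
  refine ne_top_of_le_ne_top (b := ENNReal.ofReal R * (flux K μ x + flux K μ x +
    ENNReal.ofReal C * ((∫⁻ x, ENNReal.ofReal x ∂μ) * ∫⁻ x, ENNReal.ofReal x ∂μ)))
    (by finiteness) ?_
  calc ∫⁻ t in Ioo x R, flux K μ t
      = ∫⁻ p, ENNReal.ofReal (p.1 * K p.1 p.2) *
          volume (Ioo p.1 (p.1 + p.2) ∩ Ioo x R) ∂(μ.prod μ) := by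
        simpa [Measure.restrict_apply] using
          lintegral_flux_mul hKm (ρ := volume.restrict (Ioo x R)) (measurable_const (a := 1))
    _ ≤ ∫⁻ p, ENNReal.ofReal R * (k p + k p.swap +
          ENNReal.ofReal C * (ENNReal.ofReal p.1 * ENNReal.ofReal p.2)) ∂(μ.prod μ) :=
        lintegral_mono_ae ((ae_prod_pos hμ).mono fun p ⟨hy, hz⟩ ↦ hC p hy hz)
    _ = _ := by
        rw [lintegral_const_mul' _ _ ENNReal.ofReal_ne_top,
          lintegral_add_right _ (by fun_prop), lintegral_add_left' hk, lintegral_prod_swap,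
          lintegral_const_mul' _ _ ENNReal.ofReal_ne_top, hprod,
          flux_eq_lintegral_indicator]

lemma IsNearConstantKernel.ae_flux_ne_top [SFinite μ]
    (hK : IsNearConstantKernel α ε K) (hα₀ : 0 ≤ α) (hα₁ : α ≤ 1)
    (hKm : AEMeasurable (Function.uncurry K) (μ.prod μ)) (hμ : ∀ᵐ x ∂μ, 0 < x)
    (hmass : ∫⁻ x, ENNReal.ofReal x ∂μ ≠ ∞)
    (hflux : ∀ r > 0, ∃ x ∈ Ioo 0 r, flux K μ x ≠ ∞) :
    ∀ᵐ x ∂volume.restrict (Ioi 0), flux K μ x ≠ ∞ := by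
  choose! u hu hu_flux using hflux
  have hae (n : ℕ) : ∀ᵐ t, t ∈ Ioo (u ((n : ℝ) + 1)⁻¹) n → flux K μ t ≠ ∞ := by
    rw [← ae_restrict_iff' measurableSet_Ioo]
    have hint : ∫⁻ t in Ioo (u ((n : ℝ) + 1)⁻¹) n, flux K μ t ≠ ∞ :=
      hK.setLIntegral_flux_ne_top hα₀ hα₁ hKm hμ hmass (hu _ (by positivity)).1
        (hu_flux _ (by positivity)) _
    exact (ae_lt_top' (aemeasurable_flux hKm) hint).mono fun _ ↦ ne_of_lt
  refine (ae_restrict_iff' measurableSet_Ioi).2 ((ae_all_iff.2 hae).mono fun t ht ht₀ ↦ ?_)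
  obtain ⟨n, hn⟩ := exists_nat_gt (max t t⁻¹)
  refine ht n ⟨(hu _ (by positivity)).2.trans ?_, (le_max_left _ _).trans_lt hn⟩
  exact inv_lt_of_inv_lt₀ ht₀ (((le_max_right _ _).trans_lt hn).trans (lt_add_one _))

end Flux

/-- The measure `φ(x) dx` on `(0, ∞)`. -/
noncomputable abbrev profileMeasure (φ : ℝ → ℝ) : Measure ℝ :=
  (volume.restrict (Ioi 0)).withDensity fun x ↦ ENNReal.ofReal (φ x)

/-- The integrand of the profile equation at `x`, extended by zero to all pairs of sizes. -/
noncomputable def fluxIntegrand (K : ℝ → ℝ → ℝ) (φ : ℝ → ℝ) (x : ℝ) : ℝ × ℝ → ℝ :=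
  (crossing x).indicator fun p ↦ p.1 * K p.1 p.2 * φ p.1 * φ p.2

section ProfileMeasure

variable {φ : ℝ → ℝ}

lemma ae_pos_profileMeasure (φ : ℝ → ℝ) : ∀ᵐ x ∂profileMeasure φ, 0 < x :=
  (withDensity_absolutelyContinuous _ _).ae_le (ae_restrict_mem measurableSet_Ioi)

lemma IsNearConstantKernel.aemeasurable_prod (hK : IsNearConstantKernel α ε K) :
    AEMeasurable (Function.uncurry K)
      ((volume.restrict (Ioi 0)).prod (volume.restrict (Ioi 0))) := by
  rw [Measure.prod_restrict]
  exact hK.aemeasurable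

lemma IsNearConstantKernel.aemeasurable_profileMeasure (hK : IsNearConstantKernel α ε K)
    (φ : ℝ → ℝ) :
    AEMeasurable (Function.uncurry K) ((profileMeasure φ).prod (profileMeasure φ)) :=
  hK.aemeasurable_prod.mono_ac ((withDensity_absolutelyContinuous _ _).prod
    (withDensity_absolutelyContinuous _ _))

namespace IsProfile

lemma aemeasurable (h : IsProfile K φ) : AEMeasurable φ (volume.restrict (Ioi 0)) :=
  h.1.aestronglyMeasurable.aemeasurable

lemma lintegral_profileMeasure (h : IsProfile K φ) {g : ℝ → ℝ≥0∞} (hg : Measurable g) :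
    ∫⁻ x, g x ∂profileMeasure φ = ∫⁻ x in Ioi 0, ENNReal.ofReal (φ x) * g x :=
  lintegral_withDensity_eq_lintegral_mul₀ h.aemeasurable.ennreal_ofReal hg.aemeasurable

lemma lintegral_id_profileMeasure (h : IsProfile K φ) :
    ∫⁻ x, ENNReal.ofReal x ∂profileMeasure φ = ENNReal.ofReal (∫ x in Ioi 0, x * φ x) := by
  rw [h.lintegral_profileMeasure (by fun_prop), ofReal_integral_eq_lintegral_ofReal h.2.2.1]
  · refine lintegral_congr_ae ?_
    filter_upwards [h.2.1] with x hx
    rw [← ENNReal.ofReal_mul hx, mul_comm]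
  · filter_upwards [h.2.1, ae_restrict_mem measurableSet_Ioi] with x hx (hx₀ : 0 < x)
    positivity

lemma aemeasurable_fluxIntegrand (h : IsProfile K φ) (hK : IsNearConstantKernel α ε K) (x : ℝ) :
    AEMeasurable (fluxIntegrand K φ x)
      ((volume.restrict (Ioi 0)).prod (volume.restrict (Ioi 0))) :=
  (((measurable_fst.aemeasurable.mul hK.aemeasurable_prod).mul h.aemeasurable.comp_fst).mul
    h.aemeasurable.comp_snd).indicator (measurableSet_crossing x)

lemma flux_profileMeasure (h : IsProfile K φ) (hK : IsNearConstantKernel α ε K) (x : ℝ) :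
    flux K (profileMeasure φ) x = ∫⁻ p, ENNReal.ofReal (fluxIntegrand K φ x p)
      ∂((volume.restrict (Ioi 0)).prod (volume.restrict (Ioi 0))) := by
  have hφ := h.aemeasurable.ennreal_ofReal
  have hφφ : AEMeasurable (fun p : ℝ × ℝ ↦ ENNReal.ofReal (φ p.1) * ENNReal.ofReal (φ p.2))
      ((volume.restrict (Ioi 0)).prod (volume.restrict (Ioi 0))) :=
    hφ.comp_fst.mul hφ.comp_snd
  have hk : AEMeasurable (fun p : ℝ × ℝ ↦ ENNReal.ofReal (p.1 * K p.1 p.2))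
      ((volume.restrict (Ioi 0)).prod (volume.restrict (Ioi 0))) :=
    (measurable_fst.aemeasurable.mul hK.aemeasurable_prod).ennreal_ofReal
  rw [flux_eq_lintegral_indicator, prod_withDensity₀ hφ hφ,
    lintegral_withDensity_eq_lintegral_mul₀ hφφ (hk.indicator (measurableSet_crossing x))]
  refine lintegral_congr_ae ?_
  filter_upwards [Measure.quasiMeasurePreserving_fst.ae h.2.1,
    Measure.quasiMeasurePreserving_snd.ae h.2.1] with p hφy hφz
  by_cases hp : p ∈ crossing x
  · rw [Pi.mul_apply, fluxIntegrand, indicator_of_mem hp, indicator_of_mem hp,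
      ENNReal.ofReal_mul' hφz, ENNReal.ofReal_mul' hφy]
    ring
  · rw [Pi.mul_apply, fluxIntegrand, indicator_of_notMem hp, indicator_of_notMem hp, mul_zero,
      ENNReal.ofReal_zero]

lemma ae_lintegral_fluxIntegrand_ne_top (h : IsProfile K φ) (hK : IsNearConstantKernel α ε K)
    (hα₀ : 0 ≤ α) (hα₁ : α ≤ 1) (x : ℝ) :
    ∀ᵐ y ∂volume.restrict (Ioi 0),
      ∫⁻ z in Ioi 0, ENNReal.ofReal (fluxIntegrand K φ x (y, z)) ≠ ∞ := by
  filter_upwards [h.2.1, ae_restrict_mem measurableSet_Ioi] with y hφy (hy : 0 < y)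
  rcases lt_or_ge y x with hyx | hxy
  · obtain ⟨C, hC₀, hC⟩ :=
      hK.exists_le_mul hα₀ hα₁ (lt_min hy (sub_pos.2 hyx)) (R := y) hy.le
    refine ne_top_of_le_ne_top (h.2.2.1.const_mul (y * C * φ y)).lintegral_lt_top.ne ?_
    refine lintegral_mono_ae ?_
    filter_upwards [h.2.1, ae_restrict_mem measurableSet_Ioi] with z hφz (hz : 0 < z)
    refine ENNReal.ofReal_le_ofReal (indicator_apply_le' (fun hp ↦ ?_) fun _ ↦ by positivity)
    have hxz : x - y ≤ z := sub_le_iff_le_add'.2 hp.2.le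
    calc y * K y z * φ y * φ z ≤ y * (C * z) * φ y * φ z := by
          gcongr
          exact hC y z (min_le_left _ _) le_rfl ((min_le_right _ _).trans hxz)
      _ = y * C * φ y * (z * φ z) := by ring
  · simp [fluxIntegrand, crossing, hxy.not_gt]

lemma integral_integral_fluxIntegrand (K : ℝ → ℝ → ℝ) (φ : ℝ → ℝ) (x : ℝ) :
    ∫ y in Ioi 0, ∫ z in Ioi 0, fluxIntegrand K φ x (y, z) =
      ∫ y in Ioo 0 x, ∫ z in Ioi (x - y), y * K y z * φ y * φ z := by
  rw [← Ioi_inter_Iio, ← setIntegral_indicator measurableSet_Iio]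
  refine setIntegral_congr_fun measurableSet_Ioi fun y _ ↦ ?_
  rcases lt_or_ge y x with hyx | hxy
  · have hinter : Ioi (x - y) = Ioi 0 ∩ Ioi (x - y) :=
      (inter_eq_right.2 (Ioi_subset_Ioi (sub_pos.2 hyx).le)).symm
    rw [indicator_of_mem (mem_Iio.2 hyx), hinter, ← setIntegral_indicator measurableSet_Ioi]
    simp [fluxIntegrand, crossing, indicator, hyx, sub_lt_iff_lt_add']
  · simp [fluxIntegrand, crossing, hxy.not_gt]

lemma sq_mul_eq_toReal_flux (h : IsProfile K φ) (hK : IsNearConstantKernel α ε K) (hα₀ : 0 ≤ α)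
    (hα₁ : α ≤ 1) :
    ∀ᵐ x ∂volume.restrict (Ioi 0), x ^ 2 * φ x = (flux K (profileMeasure φ) x).toReal := by
  filter_upwards [h.2.2.2] with x hx
  rw [hx, h.flux_profileMeasure hK, ← integral_integral_fluxIntegrand,
    integral_integral_eq_toReal_lintegral_prod (h.aemeasurable_fluxIntegrand hK x) ?_
      (h.ae_lintegral_fluxIntegrand_ne_top hK hα₀ hα₁ x)]
  have hpos : ∀ᵐ y ∂volume.restrict (Ioi 0), (0 : ℝ) < y := ae_restrict_mem measurableSet_Ioi
  filter_upwards [ae_prod_pos hpos, Measure.quasiMeasurePreserving_fst.ae h.2.1,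
    Measure.quasiMeasurePreserving_snd.ae h.2.1] with p ⟨hy, hz⟩ hφy hφz
  have := hK.nonneg hy hz
  exact indicator_apply_nonneg fun _ ↦ by positivity

lemma exists_flux_ne_top (h : IsProfile K φ)
    (hflux : ∀ᵐ x ∂volume.restrict (Ioi 0), x ^ 2 * φ x = (flux K (profileMeasure φ) x).toReal)
    {r : ℝ} (hr : 0 < r) : ∃ x ∈ Ioo 0 r, flux K (profileMeasure φ) x ≠ ∞ := by
  by_contra! htop
  have hle : ∀ᵐ y ∂profileMeasure φ, r ≤ y := by
    rw [ae_withDensity_iff' h.aemeasurable.ennreal_ofReal]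
    filter_upwards [hflux, ae_restrict_mem measurableSet_Ioi] with x hx (hx₀ : 0 < x) hφx
    by_contra! hxr
    rw [htop x ⟨hx₀, hxr⟩, ENNReal.toReal_top] at hx
    simp_all [hx₀.ne']
  have hzero : flux K (profileMeasure φ) (r / 2) = 0 := by
    refine setLIntegral_measure_zero _ _ (measure_mono_null (fun p hp ↦ ?_)
      (Measure.quasiMeasurePreserving_fst.ae hle))
    exact not_le.2 (hp.1.trans (half_lt_self hr))
  exact ENNReal.zero_ne_top (hzero.symm.trans (htop _ ⟨half_pos hr, half_lt_self hr⟩))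

lemma ofReal_sq_mul_eq_flux (h : IsProfile K φ) (hK : IsNearConstantKernel α ε K) (hα₀ : 0 ≤ α)
    (hα₁ : α ≤ 1) :
    ∀ᵐ x ∂volume.restrict (Ioi 0),
      ENNReal.ofReal (x ^ 2 * φ x) = flux K (profileMeasure φ) x := by
  have hflux := h.sq_mul_eq_toReal_flux hK hα₀ hα₁
  have hfin := hK.ae_flux_ne_top hα₀ hα₁ (hK.aemeasurable_profileMeasure φ)
    (ae_pos_profileMeasure φ) (h.lintegral_id_profileMeasure ▸ ENNReal.ofReal_ne_top)
    fun r hr ↦ h.exists_flux_ne_top hflux hr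
  filter_upwards [hflux, hfin] with x hx hx_fin
  rw [hx, ENNReal.ofReal_toReal hx_fin]

lemma isWeakProfile (h : IsProfile K φ) (hφ : IsNormalised φ) (hK : IsNearConstantKernel α ε K)
    (hα₀ : 0 ≤ α) (hα₁ : α ≤ 1) : IsWeakProfile K (profileMeasure φ) where
  ae_pos := ae_pos_profileMeasure φ
  lintegral_id := by rw [h.lintegral_id_profileMeasure, hφ, ENNReal.ofReal_one]
  aemeasurable_kernel := hK.aemeasurable_profileMeasure φ
  weak g hg := by
    have hKm := hK.aemeasurable_profileMeasure φ
    calc ∫⁻ x, ENNReal.ofReal (x ^ 2) * g x ∂profileMeasure φ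
        = ∫⁻ x in Ioi 0, flux K (profileMeasure φ) x * g x := by
          rw [h.lintegral_profileMeasure (by fun_prop)]
          refine lintegral_congr_ae ?_
          filter_upwards [h.ofReal_sq_mul_eq_flux hK hα₀ hα₁] with x hx
          rw [← hx, ENNReal.ofReal_mul (sq_nonneg x)]
          ring
      _ = ∫⁻ p, ENNReal.ofReal (p.1 * K p.1 p.2) *
            (∫⁻ x in Ioo p.1 (p.1 + p.2), g x ∂volume.restrict (Ioi 0))
            ∂(profileMeasure φ).prod (profileMeasure φ) := lintegral_flux_mul hKm hg
      _ = _ := by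
          refine lintegral_congr_ae ?_
          filter_upwards [ae_prod_pos (ae_pos_profileMeasure φ)] with p ⟨hy, _⟩
          rw [Measure.restrict_restrict measurableSet_Ioo,
            inter_eq_left.2 fun x hx ↦ mem_Ioi.2 (hy.trans hx.1)]

end IsProfile

end ProfileMeasure

lemma GoodW.isNearConstantKernel {W : ℝ → ℝ → ℝ} (hW : GoodW α W) (hε : 0 ≤ ε) :
    IsNearConstantKernel α ε (Kern ε W) where
  aemeasurable := ((hW.1.aemeasurable (measurableSet_Ioi.prod measurableSet_Ioi)).const_mul
    ε).const_add 2
  symm y z hy hz := by rw [Kern, Kern, hW.2.1 y z hy hz]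
  two_le y z hy hz := le_add_of_nonneg_right (mul_nonneg hε (hW.2.2.2 y z hy hz).1)
  le y z hy hz := add_le_add_right (mul_le_mul_of_nonneg_left (hW.2.2.2 y z hy hz).2 hε) 2

lemma le_mul_weight_mul_exp {a s t x C₁ C₂ : ℝ} (ha : 0 ≤ a) (hx : 0 < x) (ht : 0 ≤ t)
    (hC₁ : 0 ≤ C₁) (hC₂ : 0 ≤ C₂) (hsmall : x ≤ 1 → x ^ 2 * t ≤ C₁ * x ^ (s + 2))
    (hexp : x ^ 2 * t ≤ C₂ * exp (-(a * x))) :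
    t ≤ (C₁ * exp a + C₂) * weight s 0 x * exp (-(a * x)) := by
  rcases le_total x 1 with hx₁ | hx₁
  · have hexp_one : 1 ≤ exp a * exp (-(a * x)) := by
      rw [← exp_add]
      exact one_le_exp (by nlinarith)
    have ht_le : t ≤ C₁ * x ^ s := by
      refine le_of_mul_le_mul_left ((hsmall hx₁).trans_eq ?_) (pow_pos hx 2)
      rw [rpow_add hx, rpow_two]
      ring
    calc t ≤ C₁ * x ^ s * (exp a * exp (-(a * x))) :=
          ht_le.trans (le_mul_of_one_le_right (by positivity) hexp_one)
      _ ≤ C₁ * x ^ s * (exp a * exp (-(a * x))) + C₂ * x ^ s * exp (-(a * x)) :=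
          le_add_of_nonneg_right (by positivity)
      _ = (C₁ * exp a + C₂) * weight s 0 x * exp (-(a * x)) := by
          rw [weight, if_pos hx₁]
          ring
  · have hweight : weight s 0 x = 1 := by
      rw [weight, rpow_zero, ite_eq_right_iff]
      exact fun h ↦ by rw [h.antisymm hx₁, one_rpow]
    calc t ≤ x ^ 2 * t := le_mul_of_one_le_left ht (one_le_pow₀ hx₁)
      _ ≤ C₂ * exp (-(a * x)) := hexp
      _ ≤ (C₁ * exp a + C₂) * weight s 0 x * exp (-(a * x)) := by
          rw [hweight, mul_one]
          gcongr
          exact le_add_of_nonneg_left (by positivity)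

lemma IsProfile.ae_le_weight_mul_exp {φ : ℝ → ℝ} {β M a E : ℝ} (h : IsProfile K φ)
    (hφ : IsNormalised φ) (hK : IsNearConstantKernel α ε K) (hα₀ : 0 ≤ α) (hα₁ : α ≤ 1)
    (hαβ : α ≤ β - 1) (hε : ε ≤ 1) (hM₀ : 0 ≤ M)
    (hM : ∫⁻ x, ENNReal.ofReal (x ^ (1 - β)) ∂profileMeasure φ ≤ ENNReal.ofReal M)
    (ha₀ : 0 < a) (ha₁ : a ≤ 1) (hE₀ : 0 ≤ E)
    (hE : ∫⁻ x, ENNReal.ofReal (exp (2 * a * x)) ∂profileMeasure φ ≤ ENNReal.ofReal E) :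
    ∀ᵐ x ∂volume.restrict (Ioi 0),
      φ x ≤ (2 * M * (4 + M) * exp a + 4 / a ^ 2 * E * (exp a * M + (4 + 1 / a) * E)) *
        weight (β - α - 2) 0 x * exp (-(a * x)) := by
  have hμ := h.isWeakProfile hφ hK hα₀ hα₁
  filter_upwards [h.ofReal_sq_mul_eq_flux hK hα₀ hα₁, h.2.1, ae_restrict_mem measurableSet_Ioi]
    with x hflux hφx (hx : 0 < x)
  refine le_mul_weight_mul_exp ha₀.le hx hφx (by positivity) (by positivity) (fun hx₁ ↦ ?_)
    ((ENNReal.ofReal_le_ofReal_iff (by positivity)).1 ?_)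
  · refine (ENNReal.ofReal_le_ofReal_iff (by positivity)).1 ?_
    rw [hflux, sub_add_cancel]
    exact hμ.flux_le_rpow hK hα₀ hα₁ hαβ hε hM₀ hM hx hx₁
  · rw [hflux]
    exact hμ.flux_le_exp hK hα₀ hα₁ hαβ hε hM₀ hM ha₀ ha₁ hE₀ hE x

theorem stmt4_general (α : ℝ) (hα : α ∈ Ico (0 : ℝ) 1) (ν : ℝ) (hν : ν ∈ Ioo 0 (1 - α)) :
    ∃ εν > (0 : ℝ), ∃ a > (0 : ℝ), ∃ C > (0 : ℝ), ∀ ε : ℝ, ε ≤ εν →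
      ∀ K : ℝ → ℝ → ℝ, IsNearConstantKernel α ε K →
        ∀ φ : ℝ → ℝ, IsProfile K φ → IsNormalised φ →
          ∀ᵐ x ∂(volume.restrict (Ioi (0 : ℝ))),
            φ x ≤ C * weight (-α - ν) 0 x * exp (-(a * x)) := by
  obtain ⟨hα₀, hα₁⟩ := hα
  obtain ⟨hν₀, hν₁⟩ := hν
  obtain ⟨ε₀, hε₀, M, hM₀, hM⟩ := IsWeakProfile.exists_lintegral_rpow_le hα₀ hα₁
    (show 1 ≤ 2 - ν by linarith) (show 2 - ν < 2 by linarith)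
  have ha : (0 : ℝ) < 1 / 32 := by norm_num
  refine ⟨min ε₀ (1 / 8), by positivity, 1 / 32, ha,
    2 * M * (4 + M) * exp (1 / 32) +
      4 / (1 / 32) ^ 2 * 2 * (exp (1 / 32) * M + (4 + 1 / (1 / 32)) * 2),
    by positivity, fun ε hε K hK φ h hφ ↦ ?_⟩
  obtain ⟨hε_moment, hε_exp⟩ := le_min_iff.1 hε
  have hμ := h.isWeakProfile hφ hK hα₀ hα₁.le
  have hE := hμ.lintegral_exp_div_sixteen_le hK hα₀ hα₁ hε_exp
  rw [show -α - ν = 2 - ν - α - 2 by ring]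
  refine h.ae_le_weight_mul_exp hφ hK hα₀ hα₁.le (by linarith) (by linarith) hM₀.le
    (hM ε hε_moment K _ hK hμ) ha (by norm_num) zero_le_two ?_
  norm_num at hE ⊢
  exact hE

theorem stmt4 (α : ℝ) (hα : α ∈ Ioo (0:ℝ) 1) (W : ℝ → ℝ → ℝ) (hW : GoodW α W)
    (ν : ℝ) (hν : ν ∈ Ioo 0 (1 - α)) :
    ∃ εν > (0:ℝ), ∃ a > (0:ℝ), ∃ C > (0:ℝ), ∀ ε : ℝ, 0 < ε → ε ≤ εν →
      ∀ φ : ℝ → ℝ, IsProfile (Kern ε W) φ → IsNormalised φ →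
        ∀ᵐ x ∂(volume.restrict (Ioi (0:ℝ))),
          φ x ≤ C * weight (-α - ν) 0 x * exp (-(a * x)) := by
  obtain ⟨εν, hεν, a, ha, C, hC, h⟩ := stmt4_general α (Ioo_subset_Ico_self hα) ν hν
  exact ⟨εν, hεν, a, ha, C, hC, fun ε hε₀ hε ↦ h ε hε _ (hW.isNearConstantKernel hε₀.le)⟩
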